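/- arXiv:2507.04728 — 3 statements merged into one kernel-verified Lean document; each statement's English description precedes it below -/
import Mathlib

section
/- Let G~ be a mixed graph of order n whose underlying graph G is bipartite and whose distinct cycles are pairwise vertex-disjoint. Then H(G~) is nonsingular (equivalently r(G~) = n) if and only if both of the following hold: (a) G has a fractional perfect matching; (b) for every optimal fractional matching f of G and every even cycle C~_q of G~ with σ(C~_q) ≡ q (mod 4), the set E₁(C_q) ∩ E₂(G) is nonempty, where E₂(G) = {e ∈ E(G) : f(e) = 1}. -/
open scoped Classical

namespace MixedPaper

universe u

/-- A mixed graph: a finite simple graph together with an orientation of a subset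
of its edges.  `arc u v = true` means there is an arc from `u` to `v`. -/
structure MixedGraph (V : Type u) where
  graph : SimpleGraph V
  arc : V → V → Bool
  arc_adj : ∀ u v, arc u v → graph.Adj u v
  arc_antisymm : ∀ u v, arc u v → ¬ arc v u

variable {V : Type u}

/-- The Hermitian adjacency matrix of a mixed graph. -/
noncomputable def MixedGraph.hMatrix [Fintype V] [DecidableEq V] (M : MixedGraph V) :
    Matrix V V ℂ := fun u v =>
  if M.arc u v then Complex.I
  else if M.arc v u then -Complex.I
  else if M.graph.Adj u v then 1 else 0

/-- The H-rank of a mixed graph: the rank of its Hermitian adjacency matrix. -/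
noncomputable def MixedGraph.hRank [Fintype V] [DecidableEq V] (M : MixedGraph V) : ℕ :=
  M.hMatrix.rank

/-- The matching number of a simple graph. -/
noncomputable def matchingNumber (G : SimpleGraph V) : ℕ :=
  sSup {k | ∃ N : G.Subgraph, N.IsMatching ∧ N.edgeSet.ncard = k}

/-- A subgraph is a cycle subgraph if it is connected and every one of its vertices
has exactly two neighbours in it. -/
def IsCycleSubgraph {G : SimpleGraph V} (C : G.Subgraph) : Prop :=
  C.Connected ∧ ∀ v ∈ C.verts, {w | C.Adj v w}.ncard = 2

/-- κ(G) : the number of even cycles of G. -/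
noncomputable def evenCycleCount (G : SimpleGraph V) : ℕ :=
  {C : G.Subgraph | IsCycleSubgraph C ∧ Even C.verts.ncard}.ncard

/-- c(G) = |E(G)| - |V(G)| + ω(G), the cyclomatic number. -/
noncomputable def cyclomatic [Fintype V] (G : SimpleGraph V) : ℤ :=
  (G.edgeSet.ncard : ℤ) - (Fintype.card V : ℤ) + (Nat.card G.ConnectedComponent : ℤ)

/-- The induced mixed subgraph on a set of vertices. -/
def MixedGraph.induce (M : MixedGraph V) (S : Set V) : MixedGraph S where
  graph := M.graph.induce S
  arc := fun a b => M.arc a.1 b.1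
  arc_adj := fun a b h => M.arc_adj a.1 b.1 h
  arc_antisymm := fun a b h => M.arc_antisymm a.1 b.1 h

/-- The mixed subgraph induced by a connected component of the underlying graph. -/
def MixedGraph.comp (M : MixedGraph V) (c : M.graph.ConnectedComponent) :
    MixedGraph c.supp := M.induce c.supp

/-- The signature |f - b| of a closed walk in a mixed graph: the absolute difference
between the numbers of forward and backward arcs along the walk. -/
def walkSignature (M : MixedGraph V) {u : V} (w : M.graph.Walk u u) : ℕ :=
  ((w.darts.countP fun d => M.arc d.toProd.1 d.toProd.2 : ℤ) -
    (w.darts.countP fun d => M.arc d.toProd.2 d.toProd.1 : ℤ)).natAbs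

/-- The signature of the cycle subgraph `C` of the mixed graph `M` satisfies the
predicate `P` (expressed via a closed walk traversing `C`; the signature does not
depend on the choice of traversal). -/
def CycleSig (M : MixedGraph V) (C : M.graph.Subgraph) (P : ℕ → Prop) : Prop :=
  ∃ (u : V) (w : M.graph.Walk u u), w.IsCycle ∧
    {v | v ∈ w.support} = C.verts ∧ {e | e ∈ w.edges} = C.edgeSet ∧
    P (walkSignature M w)

/-- `C` is a pendant cycle with unique vertex `x` of degree 3. -/
def IsPendantCycle (G : SimpleGraph V) (C : G.Subgraph) (x : V) : Prop :=
  IsCycleSubgraph C ∧ x ∈ C.verts ∧ {w | G.Adj x w}.ncard = 3 ∧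
    ∀ v ∈ C.verts, v ≠ x → {w | G.Adj v w}.ncard = 2

/-- G has no pendant vertices (vertices of degree 1). -/
def NoPendantVerts (G : SimpleGraph V) : Prop := ∀ u : V, {w | G.Adj u w}.ncard ≠ 1

/-- The (distinct) cycles of G are pairwise vertex-disjoint. -/
def CyclesVertexDisjoint (G : SimpleGraph V) : Prop :=
  ∀ C₁ C₂ : G.Subgraph, IsCycleSubgraph C₁ → IsCycleSubgraph C₂ → C₁ ≠ C₂ →
    Disjoint C₁.verts C₂.verts

/-- The (distinct) even cycles of G are pairwise vertex-disjoint. -/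
def EvenCyclesVertexDisjoint (G : SimpleGraph V) : Prop :=
  ∀ C₁ C₂ : G.Subgraph, IsCycleSubgraph C₁ → IsCycleSubgraph C₂ →
    Even C₁.verts.ncard → Even C₂.verts.ncard → C₁ ≠ C₂ →
    Disjoint C₁.verts C₂.verts

/-- One pendant `K₂` deletion step, recorded on the surviving vertex sets:
`u` is pendant in the graph induced on `S` with unique neighbour `v` there,
and both are deleted. -/
def PendantStep (G : SimpleGraph V) (S T : Set V) : Prop :=
  ∃ u v, u ∈ S ∧ v ∈ S ∧ {w | w ∈ S ∧ G.Adj u w} = {v} ∧ T = S \ {u, v}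

/-- `S` is reachable from the full vertex set by a sequence of pendant K₂ deletions. -/
def PendantReaches (G : SimpleGraph V) (S : Set V) : Prop :=
  Relation.ReflTransGen (PendantStep G) Set.univ S

/-- The graph induced on `S` has no pendant vertices. -/
def NoPendantIn (G : SimpleGraph V) (S : Set V) : Prop :=
  ∀ u ∈ S, {w | w ∈ S ∧ G.Adj u w}.ncard ≠ 1

/-- `u` lies on some even cycle of `G`. -/
def OnEvenCycle (G : SimpleGraph V) (u : V) : Prop :=
  ∃ C : G.Subgraph, IsCycleSubgraph C ∧ Even C.verts.ncard ∧ u ∈ C.verts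

/-- G is the graph ∞(p,1,q): two cycles of lengths p and q sharing exactly one vertex. -/
def IsInfinityGraph (G : SimpleGraph V) (p q : ℕ) : Prop :=
  ∃ C₁ C₂ : G.Subgraph, IsCycleSubgraph C₁ ∧ IsCycleSubgraph C₂ ∧
    C₁.verts.ncard = p ∧ C₂.verts.ncard = q ∧
    (C₁.verts ∩ C₂.verts).ncard = 1 ∧ C₁ ⊔ C₂ = ⊤

/-- G is the theta graph θ(p,l,q): three internally disjoint paths with p, l, q
vertices respectively, joining two common endvertices. -/
def IsThetaGraph (G : SimpleGraph V) (p l q : ℕ) : Prop :=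
  2 ≤ p ∧ 2 ≤ l ∧ 2 ≤ q ∧ ¬(p = 2 ∧ l = 2) ∧ ¬(p = 2 ∧ q = 2) ∧ ¬(l = 2 ∧ q = 2) ∧
  ∃ (a b : V) (W₁ W₂ W₃ : G.Walk a b), W₁.IsPath ∧ W₂.IsPath ∧ W₃.IsPath ∧
    W₁.length = p - 1 ∧ W₂.length = l - 1 ∧ W₃.length = q - 1 ∧
    (∀ v : V, v ∈ W₁.support ∨ v ∈ W₂.support ∨ v ∈ W₃.support) ∧
    (∀ e ∈ G.edgeSet, e ∈ W₁.edges ∨ e ∈ W₂.edges ∨ e ∈ W₃.edges) ∧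
    {v | v ∈ W₁.support ∧ v ∈ W₂.support} = {a, b} ∧
    {v | v ∈ W₁.support ∧ v ∈ W₃.support} = {a, b} ∧
    {v | v ∈ W₂.support ∧ v ∈ W₃.support} = {a, b}

/-- Every odd cycle of `M` has signature satisfying `P`. -/
def OddCyclesSig (M : MixedGraph V) (P : ℕ → Prop) : Prop :=
  ∀ C : M.graph.Subgraph, IsCycleSubgraph C → Odd C.verts.ncard → CycleSig M C P

/-- Every even cycle of `M`, of length `n`, has signature `s` satisfying `P n s`. -/
def EvenCyclesSig (M : MixedGraph V) (P : ℕ → ℕ → Prop) : Prop :=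
  ∀ C : M.graph.Subgraph, IsCycleSubgraph C → Even C.verts.ncard →
    CycleSig M C (P C.verts.ncard)

/-- The whole mixed graph is a single cycle. -/
def IsCycleMG (M : MixedGraph V) : Prop := IsCycleSubgraph (⊤ : M.graph.Subgraph)

/-- The family 𝔊₀. -/
def MemG0 [Fintype V] [DecidableEq V] (M : MixedGraph V) : Prop :=
  M.graph.Connected ∧ 1 ≤ cyclomatic M.graph ∧ CyclesVertexDisjoint M.graph ∧
  NoPendantVerts M.graph ∧
  ∃ (C : M.graph.Subgraph) (x : V), IsPendantCycle M.graph C x ∧ Odd C.verts.ncard ∧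
    CycleSig M C Odd ∧
    ((M.induce (C.vertsᶜ ∪ {x})).hRank : ℤ) =
      2 * (matchingNumber (M.induce (C.vertsᶜ ∪ {x})).graph : ℤ) -
        2 * cyclomatic (M.induce (C.vertsᶜ ∪ {x})).graph

/-- The family 𝔛₁ : mixed ∞(p,1,q)-graphs, p even, q odd, whose odd cycle has odd
signature and whose even cycle C̃_p satisfies σ ≡ p (mod 4). -/
def MemX1 (M : MixedGraph V) : Prop :=
  ∃ p q : ℕ, Even p ∧ Odd q ∧ IsInfinityGraph M.graph p q ∧
    OddCyclesSig M Odd ∧ EvenCyclesSig M (fun n s => s % 4 = n % 4)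

/-- The family 𝔛₂ : mixed θ(p,l,q)-graphs, p even, l q odd, whose two odd cycles have odd
signatures and whose even cycle C̃_{q+l-2} satisfies q + l + σ ≡ 2 (mod 4). -/
def MemX2 (M : MixedGraph V) : Prop :=
  ∃ p l q : ℕ, Even p ∧ Odd l ∧ Odd q ∧ IsThetaGraph M.graph p l q ∧
    OddCyclesSig M Odd ∧ EvenCyclesSig M (fun _ s => (q + l + s) % 4 = 2)

/-- The family 𝔊₂ = 𝔊₀ ∪ 𝔛₁ ∪ 𝔛₂ together with the mixed odd cycles of odd signature. -/
def MemG2 [Fintype V] [DecidableEq V] (M : MixedGraph V) : Prop :=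
  MemG0 M ∨ MemX1 M ∨ MemX2 M ∨
    (IsCycleMG M ∧ Odd (Nat.card V) ∧ CycleSig M ⊤ Odd)

/-- The family 𝔜₁. -/
def MemY1 (M : MixedGraph V) : Prop :=
  ∃ p q : ℕ, Even p ∧ Odd q ∧ IsInfinityGraph M.graph p q ∧
    OddCyclesSig M Even ∧ EvenCyclesSig M (fun n s => s % 4 = n % 4)

/-- The family 𝔜₂. -/
def MemY2 (M : MixedGraph V) : Prop :=
  ∃ p l q : ℕ, Even p ∧ Odd l ∧ Odd q ∧ IsThetaGraph M.graph p l q ∧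
    OddCyclesSig M Even ∧ EvenCyclesSig M (fun _ s => (q + l + s) % 4 = 2)

/-- `M` is a disjoint union of `k` even cycles and one odd cycle with even signature. -/
def IsDisjointUnionEvenCyclesOddCycleEvenSig (M : MixedGraph V) (k : ℤ) : Prop :=
  (∀ c : M.graph.ConnectedComponent, IsCycleMG (M.comp c)) ∧
  (({c : M.graph.ConnectedComponent | Even (Nat.card c.supp)}.ncard : ℤ) = k) ∧
  (∃! c : M.graph.ConnectedComponent, Odd (Nat.card c.supp)) ∧
  (∀ c : M.graph.ConnectedComponent, Odd (Nat.card c.supp) →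
    CycleSig (M.comp c) ⊤ Even)

/-- The family 𝔉₀. -/
def MemF0 [Fintype V] [DecidableEq V] (M : MixedGraph V) : Prop :=
  M.graph.Connected ∧ 2 ≤ cyclomatic M.graph ∧ CyclesVertexDisjoint M.graph ∧
  NoPendantVerts M.graph ∧
  (∃ (C₀ : M.graph.Subgraph) (x₀ : V), IsPendantCycle M.graph C₀ x₀ ∧ Odd C₀.verts.ncard ∧
    CycleSig M C₀ Even ∧
    ∀ C : M.graph.Subgraph, IsCycleSubgraph C → C ≠ C₀ →
      Even C.verts.ncard ∧ CycleSig M C (fun s => s % 4 = C.verts.ncard % 4)) ∧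
  (∃ (Cq : M.graph.Subgraph) (x : V), IsPendantCycle M.graph Cq x ∧ Even Cq.verts.ncard ∧
    ∃ S : Set ↥(Cq.vertsᶜ ∪ {x}),
      PendantReaches (M.induce (Cq.vertsᶜ ∪ {x})).graph S ∧
      NoPendantIn (M.induce (Cq.vertsᶜ ∪ {x})).graph S ∧
      IsDisjointUnionEvenCyclesOddCycleEvenSig
        ((M.induce (Cq.vertsᶜ ∪ {x})).induce S)
        (cyclomatic (M.induce (Cq.vertsᶜ ∪ {x})).graph))

/-- The family 𝔉₂ = 𝔉₀ ∪ 𝔜₁ ∪ 𝔜₂ together with the mixed odd cycles of even signature. -/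
def MemF2 [Fintype V] [DecidableEq V] (M : MixedGraph V) : Prop :=
  MemF0 M ∨ MemY1 M ∨ MemY2 M ∨
    (IsCycleMG M ∧ Odd (Nat.card V) ∧ CycleSig M ⊤ Even)

/-- A connected component that is either an even cycle C̃_q with σ ≡ q (mod 4),
or an isolated vertex. -/
def GoodOtherComp (M : MixedGraph V) : Prop :=
  (IsCycleMG M ∧ Even (Nat.card V) ∧
    CycleSig M ⊤ (fun s => s % 4 = (Nat.card V) % 4)) ∨
  Nat.card V = 1

/-- A fractional matching of `G`, given as a weight function on `Sym2 V` vanishing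
outside the edge set. -/
def IsFracMatching [Fintype V] [DecidableEq V] (G : SimpleGraph V) (f : Sym2 V → ℝ) : Prop :=
  (∀ e ∈ G.edgeSet, 0 ≤ f e ∧ f e ≤ 1) ∧ (∀ e, e ∉ G.edgeSet → f e = 0) ∧
    ∀ v : V, ∑ e ∈ Finset.univ.filter (fun e : Sym2 V => v ∈ e), f e ≤ 1

/-- The fractional matching number m*(G). -/
noncomputable def fracMatchingNumber [Fintype V] [DecidableEq V] (G : SimpleGraph V) : ℝ :=
  sSup {x : ℝ | ∃ f : Sym2 V → ℝ, IsFracMatching G f ∧ ∑ e : Sym2 V, f e = x}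

/-- Membership in the family ℱ : fractional matchings of total weight m*(G) taking
values in {0, 1/2, 1}. -/
def InOptFamily [Fintype V] [DecidableEq V] (G : SimpleGraph V) (f : Sym2 V → ℝ) : Prop :=
  IsFracMatching G f ∧ (∑ e : Sym2 V, f e) = fracMatchingNumber G ∧
    ∀ e : Sym2 V, f e = 0 ∨ f e = 1 / 2 ∨ f e = 1

/-- An optimal fractional matching: a member of ℱ with the largest number of
edges of weight 1. -/
def IsOptFracMatching [Fintype V] [DecidableEq V] (G : SimpleGraph V) (f : Sym2 V → ℝ) : Prop :=
  InOptFamily G f ∧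
    ∀ g : Sym2 V → ℝ, InOptFamily G g →
      {e : Sym2 V | g e = 1}.ncard ≤ {e : Sym2 V | f e = 1}.ncard

/-- E₁(C) : the edges of `G` with exactly one endpoint on the cycle `C`. -/
def cutEdges (G : SimpleGraph V) (C : G.Subgraph) : Set (Sym2 V) :=
  {e | e ∈ G.edgeSet ∧ ∃ a b : V, e = s(a, b) ∧ a ∈ C.verts ∧ b ∉ C.verts}

/-!
Let `t` be a perfect matching of the bipartite graph `G`, viewed as an involution of the vertices,
and let `H` be the Hermitian adjacency matrix. Permuting the columns of `H` by `t` and normalizing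
gives a matrix with unit diagonal and, up to a nonzero factor, the same determinant. A cyclic
permutation `c` of nonzero weight in this matrix traces a cycle of `G` whose edges are alternately
in and out of the matching. As the cycles of `G` are vertex-disjoint, distinct such permutations
are disjoint, so the Leibniz expansion factors into `∏ (1 + weight c)`, and `det H ≠ 0` if and only
if no `c` has weight `-1`. Along an alternating cycle with `q = 2k` vertices that weight is
`-(-1)^k i^σ`, where `σ` is the signature, and it equals `-1` exactly when `σ ≡ q (mod 4)`.

A cycle of `G` has no chord, since a chord would close up a second cycle meeting it. A cycle `C` is
therefore alternating for `t` if and only if `t` maps its vertex set to itself, that is, if and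
only if no matching edge leaves `C`. Finally, `G` has a fractional perfect matching if and only if
it has a perfect matching, by Birkhoff's theorem on doubly stochastic matrices, and in that case
the optimal fractional matchings are exactly the indicators of the perfect matchings.
-/

section UnitDiagonalDeterminant

open Equiv

variable {n R : Type*} [Fintype n] [DecidableEq n] [CommRing R] {A : Matrix n n R}

/-- The signed term contributed by the permutation `σ` to the Leibniz expansion of `A.det`, with
the entries read row by row: the factor at `i` is `A i (σ i)`. -/
def permWeight (A : Matrix n n R) (σ : Perm n) : R :=
  ((Perm.sign σ : ℤ) : R) * ∏ i, A i (σ i)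

lemma det_eq_sum_permWeight (A : Matrix n n R) : A.det = ∑ σ, permWeight A σ := by
  rw [← Matrix.det_transpose, Matrix.det_apply']
  rfl

lemma exists_perm_forall_ne_zero_of_det_ne_zero {A : Matrix n n R} (h : A.det ≠ 0) :
    ∃ σ : Perm n, ∀ i, A i (σ i) ≠ 0 := by
  rw [det_eq_sum_permWeight] at h
  obtain ⟨σ, -, hσ⟩ := Finset.exists_ne_zero_of_sum_ne_zero h
  exact ⟨σ, fun i hi => right_ne_zero_of_mul hσ (Finset.prod_eq_zero (Finset.mem_univ i) hi)⟩

lemma permWeight_mul_of_disjoint (hA : ∀ i, A i i = 1) {σ τ : Perm n} (h : σ.Disjoint τ) :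
    permWeight A (σ * τ) = permWeight A σ * permWeight A τ := by
  have hprod : ∏ i, A i ((σ * τ) i) = (∏ i, A i (σ i)) * ∏ i, A i (τ i) := by
    rw [← Finset.prod_mul_distrib]
    refine Finset.prod_congr rfl fun i _ => ?_
    rcases h i with hσ | hτ
    · have hστ : σ (τ i) = τ i := (h (τ i)).elim id fun hτ => by rw [τ.injective hτ, hσ]
      rw [Perm.mul_apply, hστ, hσ, hA, one_mul]
    · rw [Perm.mul_apply, hτ, hA, mul_one]
  simp only [permWeight, hprod, Perm.sign_mul, Units.val_mul, Int.cast_mul]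
  ring

lemma permWeight_eq_prod_cycleFactorsFinset (hA : ∀ i, A i i = 1) (σ : Perm n) :
    permWeight A σ = ∏ c ∈ σ.cycleFactorsFinset, permWeight A c := by
  induction σ using Perm.cycle_induction_on with
  | base_one => simp [permWeight, hA]
  | base_cycles σ hσ => simp [hσ.cycleFactorsFinset_eq_singleton]
  | induction_disjoint σ τ hστ _ ihσ ihτ =>
    rw [permWeight_mul_of_disjoint hA hστ, hστ.cycleFactorsFinset_mul_eq_union,
      Finset.prod_union hστ.disjoint_cycleFactorsFinset, ← ihσ, ← ihτ]

lemma exists_cycleFactorsFinset_eq {S : Finset (Perm n)} (hcycle : ∀ c ∈ S, c.IsCycle)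
    (hdisj : (S : Set (Perm n)).Pairwise Perm.Disjoint) :
    ∃ σ : Perm n, σ.cycleFactorsFinset = S :=
  ⟨_, (Perm.cycleFactorsFinset_eq_finset (s := S)).mpr ⟨hcycle, hdisj, rfl⟩⟩

variable [IsDomain R]

lemma det_eq_prod_one_add_permWeight (hA : ∀ i, A i i = 1)
    (hdisj : {c : Perm n | c.IsCycle ∧ permWeight A c ≠ 0}.Pairwise Perm.Disjoint) :
    A.det = ∏ c with c.IsCycle ∧ permWeight A c ≠ 0, (1 + permWeight A c) := by
  rw [det_eq_sum_permWeight, Finset.prod_one_add, ← Finset.sum_filter_ne_zero]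
  refine Finset.sum_nbij Perm.cycleFactorsFinset (fun σ hσ => ?_)
    Perm.cycleFactorsFinset_injective.injOn (fun S hS => ?_)
    fun σ _ => permWeight_eq_prod_cycleFactorsFinset hA σ
  · rw [Finset.mem_filter_univ, permWeight_eq_prod_cycleFactorsFinset hA,
      Finset.prod_ne_zero_iff] at hσ
    rw [Finset.mem_powerset]
    exact fun c hc => (Finset.mem_filter_univ c).mpr
      ⟨(Perm.mem_cycleFactorsFinset_iff.mp hc).1, hσ c hc⟩
  · have hcycle : ∀ c ∈ S, c.IsCycle ∧ permWeight A c ≠ 0 := fun c hc =>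
      (Finset.mem_filter_univ c).mp (Finset.mem_powerset.mp hS hc)
    obtain ⟨σ, rfl⟩ := exists_cycleFactorsFinset_eq (fun c hc => (hcycle c hc).1)
      (hdisj.mono hcycle)
    refine ⟨σ, Finset.mem_coe.mpr ((Finset.mem_filter_univ σ).mpr ?_), rfl⟩
    rw [permWeight_eq_prod_cycleFactorsFinset hA, Finset.prod_ne_zero_iff]
    exact fun c hc => (hcycle c hc).2

lemma det_ne_zero_iff_forall_isCycle (hA : ∀ i, A i i = 1)
    (hdisj : {c : Perm n | c.IsCycle ∧ permWeight A c ≠ 0}.Pairwise Perm.Disjoint) :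
    A.det ≠ 0 ↔ ∀ c : Perm n, c.IsCycle → permWeight A c ≠ -1 := by
  rw [det_eq_prod_one_add_permWeight hA hdisj, Finset.prod_ne_zero_iff]
  refine forall_congr' fun c => ?_
  rw [Finset.mem_filter_univ, add_comm, add_eq_zero_iff_eq_neg.ne]
  exact ⟨fun h hc hw => h ⟨hc, hw ▸ neg_ne_zero.mpr one_ne_zero⟩ hw, fun h hc => h hc.1⟩

end UnitDiagonalDeterminant

section TwoStepMatrix

open Equiv

variable {n R : Type*} [Fintype n] [DecidableEq n] [CommRing R]

/-- The matrix whose entry at `(y, x)` is the weight of the two-step walk `y → t x → x` in the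
weighted digraph with adjacency matrix `H`. For a perfect matching `t` of unit-modulus edges its
diagonal is `1`, and each entry off the diagonal is a non-matching edge followed by a matching
edge. -/
def twoStepMatrix (H : Matrix n n R) (t : Perm n) : Matrix n n R :=
  Matrix.of fun y x => H y (t x) * H (t x) x

lemma det_twoStepMatrix (H : Matrix n n R) (t : Perm n) :
    (twoStepMatrix H t).det = ((Perm.sign t : ℤ) : R) * H.det * ∏ x, H (t x) x := by
  have hfactor : twoStepMatrix H t =
      H.submatrix id t * Matrix.diagonal fun x => H (t x) x := by
    ext y x
    rw [Matrix.mul_diagonal]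
    rfl
  rw [hfactor, Matrix.det_mul, Matrix.det_permute', Matrix.det_diagonal]

lemma det_twoStepMatrix_ne_zero_iff [IsDomain R] {H : Matrix n n R} {t : Perm n}
    (h : ∀ x, H (t x) x ≠ 0) : (twoStepMatrix H t).det ≠ 0 ↔ H.det ≠ 0 := by
  have hsign : ((Perm.sign t : ℤ) : R) ≠ 0 :=
    ((Perm.sign t).isUnit.map (Int.castRingHom R)).ne_zero
  rw [det_twoStepMatrix, mul_ne_zero_iff, mul_ne_zero_iff, Finset.prod_ne_zero_iff]
  exact ⟨fun hH => hH.1.2, fun hH => ⟨⟨hsign, hH⟩, fun x _ => h x⟩⟩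

end TwoStepMatrix

section SumsOverEdges

variable [Fintype V] {R : Type*} [CommSemiring R]

lemma sum_filter_mem_eq_sum_mk [DecidableEq V] (f : Sym2 V → R) (v : V) :
    ∑ e with v ∈ e, f e = ∑ w, f s(v, w) := by
  refine (Finset.sum_bij (fun w _ => s(v, w)) ?_ ?_ ?_ fun _ _ => rfl).symm
  · exact fun w _ => (Finset.mem_filter_univ _).mpr (Sym2.mem_mk_left v w)
  · exact fun _ _ _ _ h => Sym2.congr_right.mp h
  · intro e he
    obtain ⟨w, rfl⟩ := Sym2.mem_iff_exists.mp (Finset.mem_filter.mp he).2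
    exact ⟨w, Finset.mem_univ w, rfl⟩

lemma sum_sum_mk_eq_two_mul_sum {f : Sym2 V → R} (hf : ∀ v, f s(v, v) = 0) :
    ∑ v, ∑ w, f s(v, w) = 2 * ∑ e, f e := by
  simp_rw [← sum_filter_mem_eq_sum_mk, Finset.sum_filter]
  rw [Finset.sum_comm, Finset.mul_sum]
  refine Finset.sum_congr rfl fun e _ => ?_
  induction e with
  | _ a b =>
    obtain rfl | hab := eq_or_ne a b
    · simp [hf]
    · have hends : ({v | v ∈ s(a, b)} : Finset V) = {a, b} := by ext v; simp
      rw [← Finset.sum_filter, Finset.sum_const, hends, Finset.card_pair hab, nsmul_eq_mul,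
        Nat.cast_two]

end SumsOverEdges

section ZeroOneFunctions

variable {ι : Type*} {f : ι → ℝ}

lemma ite_eq_one_le (hf : ∀ i, 0 ≤ f i) (i : ι) : (if f i = 1 then (1 : ℝ) else 0) ≤ f i := by
  split_ifs with h
  exacts [h.ge, hf i]

variable [Fintype ι]

lemma ncard_eq_one_eq_sum_ite (f : ι → ℝ) :
    ({i | f i = 1}.ncard : ℝ) = ∑ i, if f i = 1 then 1 else 0 := by
  rw [Finset.sum_boole, ← Set.ncard_coe_finset, Finset.coe_filter_univ]

lemma ncard_eq_one_le_sum (hf : ∀ i, 0 ≤ f i) : ({i | f i = 1}.ncard : ℝ) ≤ ∑ i, f i := by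
  rw [ncard_eq_one_eq_sum_ite]
  exact Finset.sum_le_sum fun i _ => ite_eq_one_le hf i

lemma ncard_eq_one_eq_sum_iff (hf : ∀ i, 0 ≤ f i) :
    ({i | f i = 1}.ncard : ℝ) = ∑ i, f i ↔ ∀ i, f i = 0 ∨ f i = 1 := by
  rw [ncard_eq_one_eq_sum_ite, Finset.sum_eq_sum_iff_of_le fun i _ => ite_eq_one_le hf i]
  refine ⟨fun h i => ?_, fun h i _ => ?_⟩
  · have hi := h i (Finset.mem_univ i)
    split_ifs at hi with h1
    exacts [Or.inr h1, Or.inl hi.symm]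
  · obtain h0 | h1 := h i
    · simp [h0]
    · simp [h1]

end ZeroOneFunctions

lemma exists_perm_forall_pos_of_mem_doublyStochastic {n : Type*} [Fintype n] [DecidableEq n]
    {A : Matrix n n ℝ} (hA : A ∈ doublyStochastic ℝ n) :
    ∃ σ : Equiv.Perm n, ∀ i, 0 < A i (σ i) := by
  obtain ⟨w, hw_nonneg, hw_sum, rfl⟩ := exists_eq_sum_perm_of_mem_doublyStochastic hA
  obtain ⟨σ, -, hσ⟩ : ∃ σ ∈ Finset.univ, w σ ≠ 0 :=
    Finset.exists_ne_zero_of_sum_ne_zero (hw_sum ▸ one_ne_zero)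
  refine ⟨σ, fun i => ?_⟩
  rw [Matrix.sum_apply]
  refine Finset.sum_pos' (fun τ _ => mul_nonneg (hw_nonneg τ) ?_) ⟨σ, Finset.mem_univ σ, ?_⟩
  · rw [Equiv.Perm.permMatrix, PEquiv.toMatrix_apply]
    split_ifs
    exacts [zero_le_one, le_rfl]
  · simpa [Equiv.Perm.permMatrix, PEquiv.toMatrix_apply] using (hw_nonneg σ).lt_of_ne' hσ

section FractionalMatchings

variable [Fintype V] [DecidableEq V] {G : SimpleGraph V} {f : Sym2 V → ℝ}

namespace IsFracMatching

lemma nonneg (hf : IsFracMatching G f) (e : Sym2 V) : 0 ≤ f e := by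
  by_cases he : e ∈ G.edgeSet
  exacts [(hf.1 e he).1, (hf.2.1 e he).ge]

lemma adj_of_ne_zero (hf : IsFracMatching G f) {v w : V} (h : f s(v, w) ≠ 0) : G.Adj v w :=
  not_not.mp fun hvw => h (hf.2.1 _ hvw)

lemma two_mul_sum (hf : IsFracMatching G f) : 2 * ∑ e, f e = ∑ v, ∑ w, f s(v, w) :=
  (sum_sum_mk_eq_two_mul_sum fun _ => hf.2.1 _ G.irrefl).symm

lemma sum_mk_le_one (hf : IsFracMatching G f) (v : V) : ∑ w, f s(v, w) ≤ 1 :=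
  sum_filter_mem_eq_sum_mk f v ▸ hf.2.2 v

lemma sum_le_half_card (hf : IsFracMatching G f) : ∑ e, f e ≤ (Fintype.card V : ℝ) / 2 := by
  have hle : ∑ v, ∑ w, f s(v, w) ≤ ∑ _v : V, (1 : ℝ) :=
    Finset.sum_le_sum fun v _ => hf.sum_mk_le_one v
  rw [← hf.two_mul_sum, Finset.sum_const, Finset.card_univ, nsmul_one] at hle
  linarith

lemma sum_mk_eq_one (hf : IsFracMatching G f) (hsum : ∑ e, f e = (Fintype.card V : ℝ) / 2)
    (v : V) : ∑ w, f s(v, w) = 1 := by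
  have htotal : ∑ v, ∑ w, f s(v, w) = ∑ _v : V, (1 : ℝ) := by
    rw [← hf.two_mul_sum, hsum, Finset.sum_const, Finset.card_univ, nsmul_one,
      mul_div_cancel₀ _ two_ne_zero]
  exact (Finset.sum_eq_sum_iff_of_le fun v _ => hf.sum_mk_le_one v).mp htotal v (Finset.mem_univ v)

lemma exists_perm_adj (hf : IsFracMatching G f) (hsum : ∑ e, f e = (Fintype.card V : ℝ) / 2) :
    ∃ σ : Equiv.Perm V, ∀ v, G.Adj v (σ v) := by
  have hds : (Matrix.of fun v w => f s(v, w)) ∈ doublyStochastic ℝ V := by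
    refine mem_doublyStochastic_iff_sum.mpr
      ⟨fun v w => hf.nonneg _, hf.sum_mk_eq_one hsum, fun w => ?_⟩
    simpa only [Matrix.of_apply, Sym2.eq_swap] using hf.sum_mk_eq_one hsum w
  obtain ⟨σ, hσ⟩ := exists_perm_forall_pos_of_mem_doublyStochastic hds
  exact ⟨σ, fun v => hf.adj_of_ne_zero (hσ v).ne'⟩

end IsFracMatching

end FractionalMatchings

section PerfectMatchings

/-- A perfect matching of `G`, encoded as the permutation `t` that exchanges the two ends of every
matching edge. -/
structure IsMatchingInvolution (G : SimpleGraph V) (t : Equiv.Perm V) : Prop where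
  involutive : Function.Involutive t
  adj : ∀ v, G.Adj v (t v)

/-- The 0-1 weight function of the matching edges `s(v, t v)`. -/
noncomputable def matchingIndicator (t : Equiv.Perm V) : Sym2 V → ℝ :=
  fun e => if ∃ v, e = s(v, t v) then 1 else 0

variable {G : SimpleGraph V} {t : Equiv.Perm V}

lemma matchingIndicator_eq_zero_or_one (t : Equiv.Perm V) (e : Sym2 V) :
    matchingIndicator t e = 0 ∨ matchingIndicator t e = 1 :=
  (ite_eq_or_eq _ _ _).symm

/-- A perfect matching is extracted from a permutation `σ` moving every vertex along an edge by
using `σ` on one colour class and `σ⁻¹` on the other. -/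
lemma exists_isMatchingInvolution_of_perm_adj (hG : G.Colorable 2) {σ : Equiv.Perm V}
    (hσ : ∀ v, G.Adj v (σ v)) : ∃ t, IsMatchingInvolution G t := by
  obtain ⟨col⟩ := hG
  have hσ_symm : ∀ v, G.Adj v (σ.symm v) := fun v => by
    simpa only [σ.apply_symm_apply] using (hσ (σ.symm v)).symm
  let t : V → V := fun v => if col v = 0 then σ v else σ.symm v
  have ht : Function.Involutive t := fun v => by
    have hcol := col.valid (hσ v)
    have hcol_symm := col.valid (hσ_symm v)
    by_cases hv : col v = 0
    · have : col (σ v) ≠ 0 := by omega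
      simp [t, hv, this]
    · have : col (σ.symm v) = 0 := by omega
      simp [t, hv, this]
  refine ⟨ht.toPerm t, ht, fun v => ?_⟩
  change G.Adj v (if col v = 0 then σ v else σ.symm v)
  split_ifs
  exacts [hσ v, hσ_symm v]

namespace IsMatchingInvolution

lemma matchingIndicator_mk [DecidableEq V] (ht : IsMatchingInvolution G t) (v w : V) :
    matchingIndicator t s(v, w) = if w = t v then 1 else 0 := by
  refine if_congr ⟨?_, fun h => ⟨v, h ▸ rfl⟩⟩ rfl rfl
  rintro ⟨x, hx⟩
  obtain ⟨rfl, rfl⟩ | ⟨rfl, rfl⟩ := Sym2.eq_iff.mp hx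
  exacts [rfl, (ht.involutive w).symm]

lemma nonempty_cutEdges_inter_iff (ht : IsMatchingInvolution G t)
    (C : G.Subgraph) :
    (cutEdges G C ∩ {e | matchingIndicator t e = 1}).Nonempty ↔ ∃ v ∈ C.verts, t v ∉ C.verts := by
  constructor
  · rintro ⟨_, ⟨-, a, b, rfl, ha, hb⟩, hab⟩
    obtain rfl : b = t a := by simpa [ht.matchingIndicator_mk] using hab
    exact ⟨a, ha, hb⟩
  · rintro ⟨v, hv, htv⟩
    exact ⟨s(v, t v), ⟨ht.adj v, v, t v, rfl, hv, htv⟩, if_pos ⟨v, rfl⟩⟩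

variable [Fintype V]

lemma isFracMatching [DecidableEq V] (ht : IsMatchingInvolution G t) :
    IsFracMatching G (matchingIndicator t) := by
  refine ⟨fun e _ => ?_, fun e he => if_neg ?_, fun v => ?_⟩
  · obtain h | h := matchingIndicator_eq_zero_or_one t e <;> norm_num [h]
  · rintro ⟨v, rfl⟩
    exact he (ht.adj v)
  · simp [sum_filter_mem_eq_sum_mk, ht.matchingIndicator_mk]

lemma sum_matchingIndicator (ht : IsMatchingInvolution G t) :
    ∑ e, matchingIndicator t e = (Fintype.card V : ℝ) / 2 := by
  have h := ht.isFracMatching.two_mul_sum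
  simp only [ht.matchingIndicator_mk, Finset.sum_ite_eq', Finset.mem_univ,
    if_true, Finset.sum_const, Finset.card_univ, nsmul_one] at h
  linarith

variable [DecidableEq V]

lemma fracMatchingNumber_eq (ht : IsMatchingInvolution G t) :
    fracMatchingNumber G = (Fintype.card V : ℝ) / 2 := by
  refine IsGreatest.csSup_eq ⟨⟨_, ht.isFracMatching, ht.sum_matchingIndicator⟩, ?_⟩
  rintro x ⟨f, hf, rfl⟩
  exact hf.sum_le_half_card

lemma inOptFamily (ht : IsMatchingInvolution G t) : InOptFamily G (matchingIndicator t) :=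
  ⟨ht.isFracMatching, ht.sum_matchingIndicator.trans ht.fracMatchingNumber_eq.symm, fun e =>
    (matchingIndicator_eq_zero_or_one t e).imp_right Or.inr⟩

lemma ncard_matchingIndicator_eq_one (ht : IsMatchingInvolution G t) :
    ({e | matchingIndicator t e = 1}.ncard : ℝ) = fracMatchingNumber G := by
  rw [ht.fracMatchingNumber_eq, ← ht.sum_matchingIndicator,
    ncard_eq_one_eq_sum_iff ht.isFracMatching.nonneg]
  exact matchingIndicator_eq_zero_or_one t

lemma isOptFracMatching (ht : IsMatchingInvolution G t) :
    IsOptFracMatching G (matchingIndicator t) := by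
  refine ⟨ht.inOptFamily, fun g hg => ?_⟩
  have hle : ({e | g e = 1}.ncard : ℝ) ≤ {e | matchingIndicator t e = 1}.ncard := by
    rw [ht.ncard_matchingIndicator_eq_one, ← hg.2.1]
    exact ncard_eq_one_le_sum hg.1.nonneg
  exact_mod_cast hle

end IsMatchingInvolution

variable [Fintype V] [DecidableEq V] {f : Sym2 V → ℝ}

lemma IsFracMatching.exists_eq_matchingIndicator (hf : IsFracMatching G f)
    (hsum : ∑ e, f e = (Fintype.card V : ℝ) / 2) (h01 : ∀ e, f e = 0 ∨ f e = 1) :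
    ∃ t, IsMatchingInvolution G t ∧ f = matchingIndicator t := by
  have hpartner : ∀ v, ∃ w, {w | f s(v, w) = 1} = {w} := fun v => by
    have hcard := (ncard_eq_one_eq_sum_iff fun w => hf.nonneg s(v, w)).mpr fun w => h01 _
    rw [hf.sum_mk_eq_one hsum] at hcard
    exact Set.ncard_eq_one.mp (by exact_mod_cast hcard)
  choose t hpartner using hpartner
  have hf_one : ∀ v w, f s(v, w) = 1 ↔ w = t v := fun v w => by
    simpa using Set.ext_iff.mp (hpartner v) w
  have ht : Function.Involutive t := fun v =>
    ((hf_one (t v) v).mp (Sym2.eq_swap ▸ (hf_one v (t v)).mpr rfl)).symm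
  have hmatch : IsMatchingInvolution G (ht.toPerm t) :=
    ⟨ht, fun v => hf.adj_of_ne_zero (((hf_one v _).mpr rfl).trans_ne one_ne_zero)⟩
  refine ⟨ht.toPerm t, hmatch, funext fun e => ?_⟩
  induction e with
  | _ v w =>
    rw [hmatch.matchingIndicator_mk, Function.Involutive.coe_toPerm]
    split_ifs with hw
    exacts [(hf_one v w).mpr hw, (h01 _).resolve_right (mt (hf_one v w).mp hw)]

lemma isOptFracMatching_iff (h : ∃ t, IsMatchingInvolution G t) :
    IsOptFracMatching G f ↔ ∃ t, IsMatchingInvolution G t ∧ f = matchingIndicator t := by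
  refine ⟨fun hf => ?_, ?_⟩
  · obtain ⟨s, hs⟩ := h
    have hle : ({e | matchingIndicator s e = 1}.ncard : ℝ) ≤ {e | f e = 1}.ncard := by
      exact_mod_cast hf.2 _ hs.inOptFamily
    rw [hs.ncard_matchingIndicator_eq_one, ← hf.1.2.1] at hle
    exact hf.1.1.exists_eq_matchingIndicator (hf.1.2.1.trans hs.fracMatchingNumber_eq)
      ((ncard_eq_one_eq_sum_iff hf.1.1.nonneg).mp
        (le_antisymm (ncard_eq_one_le_sum hf.1.1.nonneg) hle))
  · rintro ⟨t, ht, rfl⟩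
    exact ht.isOptFracMatching

lemma exists_fracPerfectMatching_iff (hG : G.Colorable 2) :
    (∃ f, IsFracMatching G f ∧ ∑ e, f e = (Fintype.card V : ℝ) / 2) ↔
      ∃ t, IsMatchingInvolution G t := by
  constructor
  · rintro ⟨f, hf, hsum⟩
    obtain ⟨σ, hσ⟩ := hf.exists_perm_adj hsum
    exact exists_isMatchingInvolution_of_perm_adj hG hσ
  · rintro ⟨t, ht⟩
    exact ⟨matchingIndicator t, ht.isFracMatching, ht.sum_matchingIndicator⟩

end PerfectMatchings

section CycleSubgraphs

variable {G : SimpleGraph V} {C : G.Subgraph} {u : V}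

lemma isCycleSubgraph_toSubgraph {w : G.Walk u u} (hw : w.IsCycle) :
    IsCycleSubgraph w.toSubgraph :=
  ⟨w.toSubgraph_connected, fun _ hv =>
    hw.ncard_neighborSet_toSubgraph_eq_two (w.mem_verts_toSubgraph.mp hv)⟩

/-- A chord would close a path of `C` up to a second cycle meeting `C`. -/
lemma IsCycleSubgraph.adj_of_mem_verts (hC : IsCycleSubgraph C) (hG : CyclesVertexDisjoint G)
    {a b : V} (ha : a ∈ C.verts) (hb : b ∈ C.verts) (hab : G.Adj a b) : C.Adj a b := by
  by_contra hchord
  obtain ⟨w, hw⟩ := (C.connected_iff_forall_exists_walk_subgraph.mp hC.1).2 hb ha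
  have hpath : w.bypass.toSubgraph ≤ C := w.toSubgraph_bypass_le_toSubgraph.trans hw
  have hcycle : (SimpleGraph.Walk.cons hab w.bypass).IsCycle :=
    (SimpleGraph.Walk.cons_isCycle_iff _ hab).mpr ⟨w.bypass_isPath, fun he =>
      hchord (hpath.2 (SimpleGraph.Walk.adj_toSubgraph_iff_mem_edges.mpr he))⟩
  set W := SimpleGraph.Walk.cons hab w.bypass
  have hW : W.toSubgraph.Adj a b :=
    SimpleGraph.Walk.adj_toSubgraph_iff_mem_edges.mpr List.mem_cons_self
  have hne : C ≠ W.toSubgraph := fun h => hchord (h ▸ hW)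
  exact Set.disjoint_left.mp (hG _ _ hC (isCycleSubgraph_toSubgraph hcycle) hne) ha hW.fst_mem

end CycleSubgraphs

section CyclicSequences

/-- An `n`-cycle of `G`, encoded as the `n`-periodic sequence of vertices met when running around
it forever. The encoding fixes a starting vertex and an orientation. -/
structure IsCyclicSeq (G : SimpleGraph V) (p : ℕ → V) (n : ℕ) : Prop where
  three_le : 3 ≤ n
  adj : ∀ i, G.Adj (p i) (p (i + 1))
  eq_iff : ∀ {i j}, p i = p j ↔ i ≡ j [MOD n]

variable {G : SimpleGraph V} {p : ℕ → V} {n : ℕ} {u v : V}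

lemma exists_walk_getVert_eq (hp : ∀ i, G.Adj (p i) (p (i + 1))) (n : ℕ) :
    ∃ w : G.Walk (p 0) (p n), w.length = n ∧ ∀ i ≤ n, w.getVert i = p i := by
  induction n generalizing p with
  | zero => exact ⟨.nil, rfl, fun i hi => by rw [Nat.le_zero.mp hi]; rfl⟩
  | succ n ih =>
    obtain ⟨w, hlen, hw⟩ := ih (p := fun i => p (i + 1)) fun i => hp (i + 1)
    refine ⟨.cons (hp 0) w, by rw [SimpleGraph.Walk.length_cons, hlen], fun i hi => ?_⟩
    cases i with
    | zero => rfl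
    | succ i => exact hw i (Nat.le_of_succ_le_succ hi)

lemma getVert_mod_length (w : G.Walk u u) {i : ℕ} (hi : i ≤ w.length) :
    w.getVert (i % w.length) = w.getVert i := by
  obtain hlt | rfl := hi.lt_or_eq
  · rw [Nat.mod_eq_of_lt hlt]
  · rw [Nat.mod_self, w.getVert_zero, w.getVert_length]

lemma isCyclicSeq_getVert_mod {w : G.Walk u u} (hw : w.IsCycle) :
    IsCyclicSeq G (fun i => w.getVert (i % w.length)) w.length := by
  have hthree : 3 ≤ w.length := (SimpleGraph.Walk.isCycle_iff_isPath_tail_and_le_length.mp hw).2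
  have hlt : ∀ i, i % w.length < w.length := fun i => Nat.mod_lt i (by omega)
  refine ⟨hthree, fun i => ?_, fun {i j} => ⟨fun h => ?_, fun h => congrArg w.getVert h⟩⟩
  · rw [← Nat.mod_add_mod, getVert_mod_length w (hlt i)]
    exact w.adj_getVert_succ (hlt i)
  · exact hw.getVert_injOn' (Nat.le_sub_one_of_lt (hlt i)) (Nat.le_sub_one_of_lt (hlt j)) h

namespace IsCyclicSeq

lemma shift (h : IsCyclicSeq G p n) : IsCyclicSeq G (fun i => p (i + 1)) n :=
  ⟨h.three_le, fun i => h.adj (i + 1), h.eq_iff.trans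
    ⟨Nat.ModEq.add_right_cancel' 1, Nat.ModEq.add_right 1⟩⟩

lemma apply_add_period (h : IsCyclicSeq G p n) (i : ℕ) : p (i + n) = p i :=
  h.eq_iff.mpr (Nat.add_mod_right i n)

/-- The cycle traversed by a cyclic sequence, as a subgraph. -/
def toSubgraph (h : IsCyclicSeq G p n) : G.Subgraph where
  verts := Set.range p
  Adj a b := ∃ i, s(p i, p (i + 1)) = s(a, b)
  adj_sub := by
    rintro a b ⟨i, hi⟩
    exact G.mem_edgeSet.mp (hi ▸ h.adj i)
  edge_vert := by
    rintro a b ⟨i, hi⟩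
    obtain ha | ha := Sym2.mem_iff.mp (hi ▸ Sym2.mem_mk_left a b)
    exacts [⟨i, ha.symm⟩, ⟨i + 1, ha.symm⟩]
  symm := ⟨fun a b ⟨i, hi⟩ => ⟨i, hi.trans Sym2.eq_swap⟩⟩

lemma toSubgraph_eq_of_getVert (h : IsCyclicSeq G p n) {w : G.Walk u v} (hlen : w.length = n)
    (hw : ∀ i ≤ n, w.getVert i = p i) : w.toSubgraph = h.toSubgraph := by
  have hlt : ∀ i, i % n < n := fun i => Nat.mod_lt i (by have := h.three_le; omega)
  have hmod : ∀ i, p (i % n) = p i := fun i => h.eq_iff.mpr (Nat.mod_modEq i n)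
  ext a b
  · rw [w.mem_verts_toSubgraph, SimpleGraph.Walk.mem_support_iff_exists_getVert, hlen]
    constructor
    · rintro ⟨i, rfl, hi⟩
      exact ⟨i, (hw i hi).symm⟩
    · rintro ⟨i, rfl⟩
      exact ⟨i % n, (hw _ (hlt i).le).trans (hmod i), (hlt i).le⟩
  · rw [w.toSubgraph_adj_iff, hlen]
    constructor
    · rintro ⟨i, hi, hin⟩
      exact ⟨i, by rw [← hi, hw i hin.le, hw (i + 1) hin]⟩
    · rintro ⟨i, hi⟩
      refine ⟨i % n, ?_, hlt i⟩
      have hmod_succ : p (i % n + 1) = p (i + 1) := h.eq_iff.mpr ((Nat.mod_modEq i n).add_right 1)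
      rw [hw _ (hlt i).le, hw _ (hlt i), hmod, hmod_succ, hi]

lemma exists_isCycle (h : IsCyclicSeq G p n) :
    ∃ w : G.Walk (p 0) (p 0), w.IsCycle ∧ w.length = n ∧ ∀ i ≤ n, w.getVert i = p i := by
  have hthree := h.three_le
  have hclosed : p n = p 0 := by simpa only [Nat.zero_add] using h.apply_add_period 0
  obtain ⟨w, hlen, hw⟩ := exists_walk_getVert_eq h.adj n
  refine ⟨w.copy rfl hclosed, ?_, by rw [SimpleGraph.Walk.length_copy, hlen], fun i hi => by
    rw [SimpleGraph.Walk.getVert_copy, hw i hi]⟩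
  rw [SimpleGraph.Walk.isCycle_iff_isPath_tail_and_le_length, SimpleGraph.Walk.length_copy, hlen]
  refine ⟨(SimpleGraph.Walk.IsPath.getVert_injOn_iff _).mp fun i hi j hj hij => ?_, hthree⟩
  have htail : (w.copy rfl hclosed).tail.length + 1 = n := by
    rw [SimpleGraph.Walk.length_tail_add_one, SimpleGraph.Walk.length_copy, hlen]
    rw [SimpleGraph.Walk.not_nil_iff_lt_length, SimpleGraph.Walk.length_copy]
    omega
  simp only [Set.mem_ofPred_eq] at hi hj
  rw [SimpleGraph.Walk.getVert_tail, SimpleGraph.Walk.getVert_tail,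
    SimpleGraph.Walk.getVert_copy, SimpleGraph.Walk.getVert_copy, hw _ (by omega),
    hw _ (by omega), h.shift.eq_iff] at hij
  exact hij.eq_of_lt_of_lt (by omega) (by omega)

lemma isCycleSubgraph (h : IsCyclicSeq G p n) : IsCycleSubgraph h.toSubgraph := by
  obtain ⟨w, hw, hlen, hwp⟩ := h.exists_isCycle
  exact h.toSubgraph_eq_of_getVert hlen hwp ▸ isCycleSubgraph_toSubgraph hw

lemma ncard_verts (h : IsCyclicSeq G p n) : h.toSubgraph.verts.ncard = n := by
  have himage : h.toSubgraph.verts = p '' Finset.range n := by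
    refine (Set.image_subset_range _ _).antisymm' ?_
    rintro _ ⟨i, rfl⟩
    exact ⟨i % n, Finset.mem_range.mpr (Nat.mod_lt i (by have := h.three_le; omega)),
      h.eq_iff.mpr (Nat.mod_modEq i n)⟩
  have hinj : Set.InjOn p (Finset.range n) := fun i hi j hj hij =>
    (h.eq_iff.mp hij).eq_of_lt_of_lt (Finset.mem_range.mp hi) (Finset.mem_range.mp hj)
  rw [himage, hinj.ncard_image, Set.ncard_coe_finset, Finset.card_range]

lemma prod_range_shift {R : Type*} [CommMonoid R] (h : IsCyclicSeq G p n) (F : V → V → R) :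
    ∏ i ∈ Finset.range n, F (p (i + 1)) (p (i + 1 + 1)) =
      ∏ i ∈ Finset.range n, F (p i) (p (i + 1)) := by
  have hwrap : F (p n) (p (n + 1)) = F (p 0) (p 1) := by
    rw [← h.apply_add_period 0, ← h.apply_add_period 1, Nat.zero_add, Nat.add_comm]
  rcases n with _ | n
  · rfl
  · rw [Finset.prod_range_succ, Finset.prod_range_succ', hwrap]

end IsCyclicSeq

end CyclicSequences

section Signatures

namespace MixedGraph

variable [Fintype V] [DecidableEq V] (M : MixedGraph V) {a b u v : V}

lemma hMatrix_mul_hMatrix_swap (h : M.graph.Adj a b) : M.hMatrix a b * M.hMatrix b a = 1 := by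
  have hba := h.symm
  have hanti := M.arc_antisymm a b
  by_cases hab : M.arc a b <;> by_cases hba : M.arc b a <;> simp_all [hMatrix]

lemma hMatrix_ne_zero_iff : M.hMatrix a b ≠ 0 ↔ M.graph.Adj a b := by
  refine ⟨not_imp_comm.mp fun h => ?_, fun h =>
    left_ne_zero_of_mul_eq_one (M.hMatrix_mul_hMatrix_swap h)⟩
  have hab : ¬ M.arc a b := mt (M.arc_adj a b) h
  have hba : ¬ M.arc b a := mt (M.arc_adj b a) fun h' => h h'.symm
  simp [hMatrix, h, hab, hba]

lemma hMatrix_eq_I_zpow (h : M.graph.Adj a b) :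
    M.hMatrix a b =
      Complex.I ^ ((if M.arc a b then 1 else 0) - (if M.arc b a then 1 else 0) : ℤ) := by
  have hanti := M.arc_antisymm a b
  by_cases hab : M.arc a b <;> by_cases hba : M.arc b a <;> simp_all [hMatrix]

lemma prod_map_hMatrix_eq_I_zpow (l : List M.graph.Dart) :
    (l.map fun d => M.hMatrix d.fst d.snd).prod =
      Complex.I ^ ((l.countP fun d => M.arc d.fst d.snd : ℤ) -
        (l.countP fun d => M.arc d.snd d.fst : ℤ)) := by
  induction l with
  | nil => simp
  | cons d l ih =>
    rw [List.map_cons, List.prod_cons, ih, M.hMatrix_eq_I_zpow d.adj,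
      ← zpow_add₀ Complex.I_ne_zero, List.countP_cons, List.countP_cons]
    push_cast
    congr 1
    ring

end MixedGraph

lemma I_zpow_eq_neg_one_pow_iff (z : ℤ) (k : ℕ) :
    Complex.I ^ z = (-1) ^ k ↔ z.natAbs % 4 = 2 * k % 4 := by
  have hdvd : Complex.I ^ z = (-1) ^ k ↔ (4 : ℤ) ∣ z - 2 * k := by
    rw [← Nat.cast_ofNat (n := 4), ← Complex.isPrimitiveRoot_I.zpow_eq_one_iff_dvd,
      zpow_sub₀ Complex.I_ne_zero, div_eq_one_iff_eq (zpow_ne_zero _ Complex.I_ne_zero), zpow_mul,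
      zpow_natCast, zpow_ofNat, Complex.I_sq]
  rw [hdvd]
  omega

lemma prod_map_darts_eq_prod_getVert {G : SimpleGraph V} {R : Type*} [CommMonoid R]
    (F : V → V → R) {u v : V} (w : G.Walk u v) :
    (w.darts.map fun d => F d.fst d.snd).prod =
      ∏ i ∈ Finset.range w.length, F (w.getVert i) (w.getVert (i + 1)) := by
  induction w with
  | nil => rfl
  | cons h w ih =>
    rw [SimpleGraph.Walk.darts_cons, List.map_cons, List.prod_cons, ih,
      SimpleGraph.Walk.length_cons, Finset.prod_range_succ', mul_comm]
    simp only [SimpleGraph.Walk.getVert_cons_succ, SimpleGraph.Walk.getVert_zero]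

variable {M : MixedGraph V}

lemma cycleSig_iff_exists_toSubgraph_eq {C : M.graph.Subgraph} {P : ℕ → Prop} :
    CycleSig M C P ↔ ∃ (u : V) (w : M.graph.Walk u u),
      w.IsCycle ∧ w.toSubgraph = C ∧ P (walkSignature M w) := by
  refine exists₂_congr fun u w => and_congr_right fun _ => ?_
  rw [← and_assoc]
  refine and_congr_left fun _ => ⟨fun ⟨hverts, hedges⟩ => ?_, ?_⟩
  · ext a b
    · exact w.verts_toSubgraph ▸ Set.ext_iff.mp hverts a
    · rw [SimpleGraph.Walk.adj_toSubgraph_iff_mem_edges, ← SimpleGraph.Subgraph.mem_edgeSet]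
      exact Set.ext_iff.mp hedges s(a, b)
  · rintro rfl
    exact ⟨w.verts_toSubgraph.symm, w.edgeSet_toSubgraph.symm⟩

variable [Fintype V] [DecidableEq V]

lemma walkSignature_mod_four_iff {u : V} (w : M.graph.Walk u u) (k : ℕ) :
    walkSignature M w % 4 = 2 * k % 4 ↔
      ∏ i ∈ Finset.range w.length, M.hMatrix (w.getVert i) (w.getVert (i + 1)) = (-1) ^ k := by
  rw [← prod_map_darts_eq_prod_getVert M.hMatrix, M.prod_map_hMatrix_eq_I_zpow,
    I_zpow_eq_neg_one_pow_iff]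
  rfl

lemma cycleSig_mod_four_iff {C : M.graph.Subgraph} {k : ℕ} (hC : C.verts.ncard = 2 * k) :
    CycleSig M C (fun s => s % 4 = C.verts.ncard % 4) ↔
      ∃ (p : ℕ → V) (h : IsCyclicSeq M.graph p (2 * k)), h.toSubgraph = C ∧
        ∏ i ∈ Finset.range (2 * k), M.hMatrix (p i) (p (i + 1)) = (-1) ^ k := by
  rw [cycleSig_iff_exists_toSubgraph_eq, hC]
  constructor
  · rintro ⟨u, w, hw, rfl, hsig⟩
    have h := isCyclicSeq_getVert_mod hw
    have hsub := h.toSubgraph_eq_of_getVert rfl fun i hi => (getVert_mod_length w hi).symm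
    have hlen : w.length = 2 * k := by rw [← h.ncard_verts, ← hsub, hC]
    rw [walkSignature_mod_four_iff] at hsig
    have h' : IsCyclicSeq M.graph (fun i => w.getVert (i % w.length)) (2 * k) := by
      rwa [← hlen]
    refine ⟨_, h', (h'.toSubgraph_eq_of_getVert hlen fun i hi => ?_).symm, hsig ▸ ?_⟩
    · exact (getVert_mod_length w (hlen ▸ hi)).symm
    · rw [← hlen]
      refine Finset.prod_congr rfl fun i hi => ?_
      have hi := Finset.mem_range.mp hi
      rw [getVert_mod_length w hi.le, getVert_mod_length w hi]
  · rintro ⟨p, h, rfl, hprod⟩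
    obtain ⟨w, hw, hlen, hwp⟩ := h.exists_isCycle
    refine ⟨_, w, hw, h.toSubgraph_eq_of_getVert hlen hwp, ?_⟩
    rw [walkSignature_mod_four_iff, hlen, ← hprod]
    refine Finset.prod_congr rfl fun i hi => ?_
    have hi := Finset.mem_range.mp hi
    rw [hwp i hi.le, hwp (i + 1) hi]

end Signatures

section AlternatingCycles

open Equiv

/-- A cycle of `G` that alternates between edges of the perfect matching `t` and other edges,
encoded as the cyclic permutation `c` of its vertices in one colour class for which the cycle reads
`x, t (c x), c x, t (c (c x)), …`. At fixed points of `c` the condition `adj` only involves the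
matching edge `s(x, t x)`. -/
structure IsAlternatingCycle (G : SimpleGraph V) (t c : Perm V) : Prop where
  isCycle : c.IsCycle
  adj : ∀ x, G.Adj x (t (c x))

/-- The sequence `v, t (c v), c v, t (c (c v)), c (c v), …`. -/
def alternatingSeq (t c : Perm V) (v : V) (i : ℕ) : V :=
  if Even i then (c ^ (i / 2)) v else t ((c ^ (i / 2 + 1)) v)

lemma alternatingSeq_two_mul (t c : Perm V) (v : V) (j : ℕ) :
    alternatingSeq t c v (2 * j) = (c ^ j) v := by
  rw [alternatingSeq, if_pos (even_two_mul j), Nat.mul_div_cancel_left j two_pos]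

lemma alternatingSeq_two_mul_add_one (t c : Perm V) (v : V) (j : ℕ) :
    alternatingSeq t c v (2 * j + 1) = t ((c ^ (j + 1)) v) := by
  rw [alternatingSeq, if_neg (Nat.not_even_two_mul_add_one j), Nat.mul_add_div two_pos]
  rfl

lemma alternatingSeq_zero (t c : Perm V) (v : V) : alternatingSeq t c v 0 = v :=
  alternatingSeq_two_mul t c v 0

lemma forall_nat_iff_two_mul_and_two_mul_add_one {P : ℕ → Prop} :
    (∀ i, P i) ↔ (∀ j, P (2 * j)) ∧ ∀ j, P (2 * j + 1) := by
  refine ⟨fun h => ⟨fun j => h _, fun j => h _⟩, fun ⟨heven, hodd⟩ i => ?_⟩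
  obtain ⟨j, rfl | rfl⟩ := i.even_or_odd'
  exacts [heven j, hodd j]

lemma not_two_mul_modEq_two_mul_add_one (a b k : ℕ) : ¬ 2 * a ≡ 2 * b + 1 [MOD 2 * k] := by
  intro h
  have := h.of_mul_right k
  unfold Nat.ModEq at this
  omega

variable {G : SimpleGraph V} {t c d : Perm V} {v : V}

lemma isCycleOn_support [Fintype V] [DecidableEq V] (hc : c.IsCycle) :
    c.IsCycleOn (c.support : Set V) := by
  simpa only [Perm.coe_support_eq_set_support] using hc.isCycleOn

namespace IsAlternatingCycle

lemma color_apply (hc : IsAlternatingCycle G t c) (ht : IsMatchingInvolution G t)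
    (col : G.Coloring (Fin 2)) (x : V) : col (c x) = col x := by
  have hstep := col.valid (hc.adj x)
  have hmatch := col.valid (ht.adj (c x))
  omega

lemma color_pow_apply (hc : IsAlternatingCycle G t c) (ht : IsMatchingInvolution G t)
    (col : G.Coloring (Fin 2)) (j : ℕ) (x : V) : col ((c ^ j) x) = col x := by
  induction j with
  | zero => rfl
  | succ j ih => rw [pow_succ', Perm.mul_apply, hc.color_apply ht, ih]

lemma color_ne_color_apply_pow_apply (hc : IsAlternatingCycle G t c)
    (ht : IsMatchingInvolution G t) (col : G.Coloring (Fin 2)) (j : ℕ) (x : V) :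
    col x ≠ col (t ((c ^ j) x)) := by
  rw [← hc.color_pow_apply ht col j x]
  exact col.valid (ht.adj _)

variable [Fintype V] [DecidableEq V]

lemma isCyclicSeq (hc : IsAlternatingCycle G t c) (ht : IsMatchingInvolution G t)
    (hG : G.Colorable 2) (hv : v ∈ c.support) :
    IsCyclicSeq G (alternatingSeq t c v) (2 * c.support.card) := by
  obtain ⟨col⟩ := hG
  have hpow : ∀ a b : ℕ, (c ^ a) v = (c ^ b) v ↔ a ≡ b [MOD c.support.card] := fun a b =>
    (isCycleOn_support hc.isCycle).pow_apply_eq_pow_apply hv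
  have heven_ne_odd : ∀ a b : ℕ, (c ^ a) v ≠ t ((c ^ b) v) := fun a b h =>
    hc.color_ne_color_apply_pow_apply ht col b v (by rw [← h, hc.color_pow_apply ht])
  refine ⟨?_, forall_nat_iff_two_mul_and_two_mul_add_one.mpr ⟨fun j => ?_, fun j => ?_⟩,
    fun {i j} => ?_⟩
  · have := hc.isCycle.two_le_card_support
    omega
  · rw [alternatingSeq_two_mul, alternatingSeq_two_mul_add_one, pow_succ', Perm.mul_apply]
    exact hc.adj _
  · rw [alternatingSeq_two_mul_add_one, show 2 * j + 1 + 1 = 2 * (j + 1) by rfl,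
      alternatingSeq_two_mul]
    exact (ht.adj _).symm
  · obtain ⟨a, rfl | rfl⟩ := i.even_or_odd' <;> obtain ⟨b, rfl | rfl⟩ := j.even_or_odd' <;>
      simp only [alternatingSeq_two_mul, alternatingSeq_two_mul_add_one]
    · rw [hpow, Nat.ModEq.mul_left_cancel_iff' two_ne_zero]
    · exact iff_of_false (heven_ne_odd _ _) (not_two_mul_modEq_two_mul_add_one _ _ _)
    · exact iff_of_false (heven_ne_odd _ _).symm fun h =>
        not_two_mul_modEq_two_mul_add_one _ _ _ h.symm
    · rw [t.injective.eq_iff, hpow, Nat.ModEq.add_iff_right rfl, Nat.ModEq.add_iff_right rfl,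
        Nat.ModEq.mul_left_cancel_iff' two_ne_zero]

lemma mapsTo_verts (hc : IsAlternatingCycle G t c) (ht : IsMatchingInvolution G t)
    (hG : G.Colorable 2) (hv : v ∈ c.support) :
    ∀ x ∈ (hc.isCyclicSeq ht hG hv).toSubgraph.verts,
      t x ∈ (hc.isCyclicSeq ht hG hv).toSubgraph.verts := by
  rintro _ ⟨i, rfl⟩
  revert i
  refine forall_nat_iff_two_mul_and_two_mul_add_one.mpr ⟨fun j => ?_, fun j => ?_⟩
  · rw [← (hc.isCyclicSeq ht hG hv).apply_add_period]
    obtain ⟨m, hm⟩ := Nat.exists_eq_add_of_lt (Finset.card_pos.mpr ⟨v, hv⟩)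
    refine ⟨2 * (j + m) + 1, ?_⟩
    rw [hm, ← mul_add, alternatingSeq_two_mul, alternatingSeq_two_mul_add_one, Nat.zero_add,
      Nat.add_assoc]
  · refine ⟨2 * (j + 1), ?_⟩
    rw [alternatingSeq_two_mul_add_one, alternatingSeq_two_mul, ht.involutive]

/-- Both neighbours of `x` on the cycle have the form `t y`: the matching edge gives `y = x`, the
other one `y = c x`. -/
lemma eq_or_eq_apply_of_toSubgraph_adj (hc : IsAlternatingCycle G t c)
    (ht : IsMatchingInvolution G t) (hG : G.Colorable 2) (hv : v ∈ c.support)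
    (col : G.Coloring (Fin 2)) {x y : V} (hx : col x = col v)
    (h : (hc.isCyclicSeq ht hG hv).toSubgraph.Adj x (t y)) : y = x ∨ y = c x := by
  have hne := hc.color_ne_color_apply_pow_apply ht col
  obtain ⟨i, hi⟩ := h
  obtain ⟨j, rfl | rfl⟩ := i.even_or_odd'
  · rw [alternatingSeq_two_mul, alternatingSeq_two_mul_add_one, pow_succ', Perm.mul_apply] at hi
    obtain ⟨rfl, hy⟩ | ⟨-, rfl⟩ := Sym2.eq_iff.mp hi
    · exact .inr (t.injective hy).symm
    · exact absurd hx.symm (by simpa only [pow_succ', Perm.mul_apply] using hne (j + 1) v)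
  · rw [alternatingSeq_two_mul_add_one, show 2 * j + 1 + 1 = 2 * (j + 1) by rfl,
      alternatingSeq_two_mul] at hi
    obtain ⟨rfl, -⟩ | ⟨hy, rfl⟩ := Sym2.eq_iff.mp hi
    · exact absurd hx.symm (hne (j + 1) v)
    · exact .inl (t.injective hy).symm

end IsAlternatingCycle

lemma IsAlternatingCycle.disjoint_of_ne [Finite V] (hc : IsAlternatingCycle G t c)
    (hd : IsAlternatingCycle G t d) (ht : IsMatchingInvolution G t) (hG : G.Colorable 2)
    (hdisj : CyclesVertexDisjoint G) (hcd : c ≠ d) : c.Disjoint d := by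
  have := Fintype.ofFinite V
  contrapose! hcd
  simp only [Perm.Disjoint, not_forall, not_or, ← Ne.eq_def, ← Perm.mem_support] at hcd
  obtain ⟨v, hvc, hvd⟩ := hcd
  obtain ⟨col⟩ := id hG
  have hp := hc.isCyclicSeq ht hG hvc
  have hr := hd.isCyclicSeq ht hG hvd
  have hsame : hp.toSubgraph = hr.toSubgraph := by
    by_contra hne
    exact Set.disjoint_left.mp (hdisj _ _ hp.isCycleSubgraph hr.isCycleSubgraph hne)
      ⟨0, alternatingSeq_zero t c v⟩ ⟨0, alternatingSeq_zero t d v⟩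
  have hagree : ∀ x ∈ c.support, c x = d x := fun x hx => by
    obtain ⟨j, rfl⟩ := hc.isCycle.exists_pow_eq (Perm.mem_support.mp hvc) (Perm.mem_support.mp hx)
    have hadj : hp.toSubgraph.Adj ((c ^ j) v) (t (c ((c ^ j) v))) := ⟨2 * j, by
      rw [alternatingSeq_two_mul, alternatingSeq_two_mul_add_one, pow_succ', Perm.mul_apply]⟩
    rw [hsame] at hadj
    exact (hd.eq_or_eq_apply_of_toSubgraph_adj ht hG hvd col
      (hc.color_pow_apply ht col j v) hadj).resolve_left (Perm.mem_support.mp hx)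
  exact hc.isCycle.eq_on_support_inter_nonempty_congr hd.isCycle
    (fun x hx => hagree x (Finset.mem_inter.mp hx).1) (hagree v hvc) hvc

lemma prod_range_two_mul {R : Type*} [CommMonoid R] (F : ℕ → R) (k : ℕ) :
    ∏ i ∈ Finset.range (2 * k), F i = ∏ j ∈ Finset.range k, F (2 * j) * F (2 * j + 1) := by
  induction k with
  | zero => rfl
  | succ k ih =>
    rw [Finset.prod_range_succ, ← ih, Nat.mul_succ, Finset.prod_range_succ, Finset.prod_range_succ,
      mul_assoc]

section Weight

variable {R : Type*} [Fintype V] [DecidableEq V]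

lemma prod_univ_eq_prod_range_pow_apply [CommMonoid R] (hc : c.IsCycle) (hv : v ∈ c.support)
    {F : V → R} (hF : ∀ x ∉ c.support, F x = 1) :
    ∏ x, F x = ∏ j ∈ Finset.range c.support.card, F ((c ^ j) v) := by
  rw [← Finset.prod_subset c.support.subset_univ fun x _ hx => hF x hx]
  refine (Finset.prod_nbij (fun j => (c ^ j) v) (fun j _ => ?_) (fun i hi j hj hij => ?_)
    (fun x hx => ?_) fun _ _ => rfl).symm
  · exact Perm.pow_apply_mem_support.mpr hv
  · exact (((isCycleOn_support hc).pow_apply_eq_pow_apply hv).mp hij).eq_of_lt_of_lt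
      (Finset.mem_range.mp hi) (Finset.mem_range.mp hj)
  · obtain ⟨j, hj, hjx⟩ := (isCycleOn_support hc).exists_pow_eq hv hx
    exact ⟨j, Finset.mem_coe.mpr (Finset.mem_range.mpr hj), hjx⟩

lemma permWeight_twoStepMatrix_of_isCycle [CommRing R] {H : Matrix V V R}
    (hH : ∀ x, H x (t x) * H (t x) x = 1) (hc : c.IsCycle) (hv : v ∈ c.support) :
    permWeight (twoStepMatrix H t) c =
      -(-1) ^ c.support.card * ∏ i ∈ Finset.range (2 * c.support.card),
        H (alternatingSeq t c v i) (alternatingSeq t c v (i + 1)) := by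
  have hprod : ∏ x, twoStepMatrix H t x (c x) = ∏ i ∈ Finset.range (2 * c.support.card),
      H (alternatingSeq t c v i) (alternatingSeq t c v (i + 1)) := by
    rw [prod_univ_eq_prod_range_pow_apply hc hv fun x hx => ?_, prod_range_two_mul]
    · refine Finset.prod_congr rfl fun j _ => ?_
      rw [show 2 * j + 1 + 1 = 2 * (j + 1) by rfl, alternatingSeq_two_mul,
        alternatingSeq_two_mul_add_one, alternatingSeq_two_mul, pow_succ', Perm.mul_apply]
      rfl
    · rw [Perm.notMem_support.mp hx]
      exact hH x
  rw [permWeight, hprod, hc.sign]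
  push_cast
  rfl

end Weight

lemma exists_isCycle_forall_pow_apply_eq [Fintype V] [DecidableEq V] {q : ℕ → V} {k : ℕ}
    (hk : 2 ≤ k) (hq : ∀ {i j}, q i = q j ↔ i ≡ j [MOD k]) :
    ∃ c : Perm V, c.IsCycle ∧ c.support.card = k ∧ q 0 ∈ c.support ∧
      ∀ j, (c ^ j) (q 0) = q j := by
  set l := (List.range k).map q
  have hlen : l.length = k := by rw [List.length_map, List.length_range]
  have hnodup : l.Nodup := List.nodup_range.map_on fun i hi j hj hij =>
    (hq.mp hij).eq_of_lt_of_lt (List.mem_range.mp hi) (List.mem_range.mp hj)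
  have hsupport : l.formPerm.support = l.toFinset := by
    refine List.support_formPerm_of_nodup l hnodup fun x hx => ?_
    rw [hx, List.length_singleton] at hlen
    omega
  refine ⟨l.formPerm, List.isCycle_formPerm hnodup (hlen.symm ▸ hk), ?_, ?_, fun j => ?_⟩
  · rw [hsupport, List.toFinset_card_of_nodup hnodup, hlen]
  · rw [hsupport, List.mem_toFinset]
    exact List.mem_map_of_mem (List.mem_range.mpr (by omega))
  · have hget : ∀ i (hi : i < l.length), l[i] = q i := fun i hi => by
      rw [List.getElem_map, List.getElem_range]
    have hpos : 0 < l.length := by omega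
    rw [← hget 0 hpos, List.formPerm_pow_apply_getElem l hnodup j 0 hpos, hget, hlen, hq,
      Nat.zero_add]
    exact Nat.mod_modEq j k

namespace IsCyclicSeq

variable {p : ℕ → V} {n k : ℕ}

lemma eq_or_eq_of_toSubgraph_adj (h : IsCyclicSeq G p n) {i : ℕ} {y : V}
    (hy : h.toSubgraph.Adj (p (i + 1)) y) : y = p i ∨ y = p (i + 2) := by
  obtain ⟨j, hj⟩ := hy
  obtain ⟨hji, rfl⟩ | ⟨rfl, hji⟩ := Sym2.eq_iff.mp hj
  · exact .inr (h.eq_iff.mpr ((h.eq_iff.mp hji).add_right 1))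
  · exact .inl (h.eq_iff.mpr ((h.eq_iff.mp hji).add_right_cancel' 1))

lemma apply_ne_apply_add_two (h : IsCyclicSeq G p n) (i : ℕ) : p i ≠ p (i + 2) := by
  rw [Ne, h.eq_iff]
  intro hmod
  have hzero : 0 ≡ 2 [MOD n] := hmod.add_left_cancel' i
  exact two_ne_zero (hzero.eq_of_lt_of_lt (by have := h.three_le; omega) h.three_le).symm

/-- Once one edge of the cycle is a matching edge, every other one is: the matching edge at the
next vertex cannot lead back. -/
lemma forall_apply_eq_of_apply_one_eq (h : IsCyclicSeq G p n)
    (hstep : ∀ i, t (p (i + 1)) = p i ∨ t (p (i + 1)) = p (i + 2)) (hone : t (p 1) = p 2) (j : ℕ) :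
    t (p (2 * j + 1)) = p (2 * j + 2) := by
  induction j with
  | zero => exact hone
  | succ j ih =>
    refine (hstep (2 * j + 2)).resolve_left fun hback => ?_
    exact h.apply_ne_apply_add_two (2 * j + 1) (t.injective (ih.trans hback.symm))

variable [Fintype V] [DecidableEq V]

lemma exists_isCycle_eq_alternatingSeq (h : IsCyclicSeq G p (2 * k))
    (hp : ∀ j, t (p (2 * j + 2)) = p (2 * j + 1)) :
    ∃ c : Perm V, c.IsCycle ∧ c.support.card = k ∧ p 0 ∈ c.support ∧
      alternatingSeq t c (p 0) = p := by
  obtain ⟨c, hc, hcard, hmem, hpow⟩ := exists_isCycle_forall_pow_apply_eq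
    (q := fun j => p (2 * j)) (k := k) (by have := h.three_le; omega)
    (h.eq_iff.trans (Nat.ModEq.mul_left_cancel_iff' two_ne_zero))
  refine ⟨c, hc, hcard, hmem, funext (forall_nat_iff_two_mul_and_two_mul_add_one.mpr
    ⟨fun j => ?_, fun j => ?_⟩)⟩
  · rw [alternatingSeq_two_mul]
    exact hpow j
  · rw [alternatingSeq_two_mul_add_one, ← hp]
    exact congrArg t (hpow (j + 1))

lemma exists_isCycle_prod_alternatingSeq_eq {R : Type*} [CommMonoid R]
    (ht : IsMatchingInvolution G t) (h : IsCyclicSeq G p (2 * k))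
    (hstep : ∀ i, t (p (i + 1)) = p i ∨ t (p (i + 1)) = p (i + 2)) (F : V → V → R) :
    ∃ (c : Perm V) (v : V), c.IsCycle ∧ c.support.card = k ∧ v ∈ c.support ∧
      ∏ i ∈ Finset.range (2 * k), F (alternatingSeq t c v i) (alternatingSeq t c v (i + 1)) =
        ∏ i ∈ Finset.range (2 * k), F (p i) (p (i + 1)) := by
  by_cases hone : t (p 1) = p 2
  · obtain ⟨c, hc, hcard, hmem, hseq⟩ := h.exists_isCycle_eq_alternatingSeq fun j => by
      rw [← h.forall_apply_eq_of_apply_one_eq hstep hone j, ht.involutive]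
    exact ⟨c, p 0, hc, hcard, hmem, by rw [hseq]⟩
  · have htwo : t (p 2) = p 3 := (hstep 1).resolve_left fun hback =>
      hone (by rw [← hback, ht.involutive])
    obtain ⟨c, hc, hcard, hmem, hseq⟩ := h.shift.exists_isCycle_eq_alternatingSeq fun j => by
      rw [← h.shift.forall_apply_eq_of_apply_one_eq (fun i => hstep (i + 1)) htwo j,
        ht.involutive]
    exact ⟨c, p 1, hc, hcard, hmem, by rw [hseq, h.prod_range_shift F]⟩

end IsCyclicSeq

end AlternatingCycles

section NonsingularityCriterion

variable [Fintype V] [DecidableEq V] {M : MixedGraph V} {t c : Equiv.Perm V}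

lemma isAlternatingCycle_of_permWeight_ne_zero (hc : c.IsCycle)
    (hw : permWeight (twoStepMatrix M.hMatrix t) c ≠ 0) : IsAlternatingCycle M.graph t c :=
  ⟨hc, fun x => M.hMatrix_ne_zero_iff.mp (left_ne_zero_of_mul
    (Finset.prod_ne_zero_iff.mp (right_ne_zero_of_mul hw) x (Finset.mem_univ x)))⟩

lemma neg_neg_one_pow_mul_eq_neg_one_iff {R : Type*} [CommRing R] (k : ℕ) (a : R) :
    -(-1) ^ k * a = -1 ↔ a = (-1) ^ k := by
  rw [neg_mul, neg_inj]
  rcases neg_one_pow_eq_or R k with h | h <;> rw [h]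
  · rw [one_mul]
  · rw [neg_one_mul, neg_eq_iff_eq_neg]

namespace IsMatchingInvolution

lemma permWeight_twoStepMatrix_eq_neg_one_iff (ht : IsMatchingInvolution M.graph t)
    (hc : c.IsCycle) {v : V} (hv : v ∈ c.support) :
    permWeight (twoStepMatrix M.hMatrix t) c = -1 ↔
      ∏ i ∈ Finset.range (2 * c.support.card),
        M.hMatrix (alternatingSeq t c v i) (alternatingSeq t c v (i + 1)) =
          (-1) ^ c.support.card := by
  rw [permWeight_twoStepMatrix_of_isCycle
    (fun x => M.hMatrix_mul_hMatrix_swap (ht.adj x)) hc hv, neg_neg_one_pow_mul_eq_neg_one_iff]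

lemma exists_permWeight_eq_neg_one_iff (ht : IsMatchingInvolution M.graph t)
    (hG : M.graph.Colorable 2) (hdisj : CyclesVertexDisjoint M.graph) :
    (∃ c : Equiv.Perm V, c.IsCycle ∧ permWeight (twoStepMatrix M.hMatrix t) c = -1) ↔
      ∃ C : M.graph.Subgraph, IsCycleSubgraph C ∧ Even C.verts.ncard ∧
        CycleSig M C (fun s => s % 4 = C.verts.ncard % 4) ∧ ∀ v ∈ C.verts, t v ∈ C.verts := by
  constructor
  · rintro ⟨c, hc, hw⟩
    have halt := isAlternatingCycle_of_permWeight_ne_zero hc (hw ▸ neg_ne_zero.mpr one_ne_zero)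
    obtain ⟨v, hv⟩ := hc.nonempty_support
    have hp := halt.isCyclicSeq ht hG hv
    refine ⟨hp.toSubgraph, hp.isCycleSubgraph, ?_, ?_, halt.mapsTo_verts ht hG hv⟩
    · rw [hp.ncard_verts]
      exact even_two_mul _
    · exact (cycleSig_mod_four_iff hp.ncard_verts).mpr
        ⟨_, hp, rfl, (ht.permWeight_twoStepMatrix_eq_neg_one_iff hc hv).mp hw⟩
  · rintro ⟨C, hC, heven, hsig, hclosed⟩
    obtain ⟨k, hk⟩ := heven.two_dvd
    obtain ⟨p, hp, rfl, hprod⟩ := (cycleSig_mod_four_iff hk).mp hsig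
    have hstep : ∀ i, t (p (i + 1)) = p i ∨ t (p (i + 1)) = p (i + 2) := fun i =>
      hp.eq_or_eq_of_toSubgraph_adj (hC.adj_of_mem_verts hdisj ⟨i + 1, rfl⟩
        (hclosed _ ⟨i + 1, rfl⟩) (ht.adj _))
    obtain ⟨c, v, hc, rfl, hv, hprod_eq⟩ :=
      hp.exists_isCycle_prod_alternatingSeq_eq ht hstep M.hMatrix
    exact ⟨c, hc, (ht.permWeight_twoStepMatrix_eq_neg_one_iff hc hv).mpr (hprod_eq.trans hprod)⟩

lemma det_hMatrix_ne_zero_iff (ht : IsMatchingInvolution M.graph t) (hG : M.graph.Colorable 2)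
    (hdisj : CyclesVertexDisjoint M.graph) :
    M.hMatrix.det ≠ 0 ↔ ∀ C : M.graph.Subgraph, IsCycleSubgraph C → Even C.verts.ncard →
      CycleSig M C (fun s => s % 4 = C.verts.ncard % 4) → ∃ v ∈ C.verts, t v ∉ C.verts := by
  have hdiag : ∀ x, twoStepMatrix M.hMatrix t x x = 1 := fun x =>
    M.hMatrix_mul_hMatrix_swap (ht.adj x)
  have hpairwise : {c : Equiv.Perm V | c.IsCycle ∧
      permWeight (twoStepMatrix M.hMatrix t) c ≠ 0}.Pairwise Equiv.Perm.Disjoint :=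
    fun c hc d hd => (isAlternatingCycle_of_permWeight_ne_zero hc.1 hc.2).disjoint_of_ne
      (isAlternatingCycle_of_permWeight_ne_zero hd.1 hd.2) ht hG hdisj
  rw [← det_twoStepMatrix_ne_zero_iff fun x => M.hMatrix_ne_zero_iff.mpr (ht.adj x).symm,
    det_ne_zero_iff_forall_isCycle hdiag hpairwise]
  have h := not_congr (ht.exists_permWeight_eq_neg_one_iff hG hdisj)
  push Not at h
  exact h

end IsMatchingInvolution

lemma exists_isMatchingInvolution_of_det_ne_zero (hG : M.graph.Colorable 2)
    (h : M.hMatrix.det ≠ 0) : ∃ t, IsMatchingInvolution M.graph t := by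
  obtain ⟨σ, hσ⟩ := exists_perm_forall_ne_zero_of_det_ne_zero h
  exact exists_isMatchingInvolution_of_perm_adj hG fun v => M.hMatrix_ne_zero_iff.mp (hσ v)

end NonsingularityCriterion

/-- A bipartite cycle-disjoint mixed graph G̃ of order n is
nonsingular iff (a) G has a fractional perfect matching, and (b) for every optimal
fractional matching f and every even cycle C̃_q with σ(C̃_q) ≡ q (mod 4), the set
E₁(C_q) ∩ E₂(G) is nonempty. -/
theorem nonsingular_iff_of_bipartite_cycleDisjoint
    {V : Type u} [Fintype V] [DecidableEq V] (M : MixedGraph V)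
    (hbip : M.graph.Colorable 2) (hdisj : CyclesVertexDisjoint M.graph) :
    M.hMatrix.det ≠ 0 ↔
      ((∃ f : Sym2 V → ℝ, IsFracMatching M.graph f ∧
          ∑ e : Sym2 V, f e = (Fintype.card V : ℝ) / 2) ∧
        ∀ f : Sym2 V → ℝ, IsOptFracMatching M.graph f →
          ∀ C : M.graph.Subgraph, IsCycleSubgraph C → Even C.verts.ncard →
            CycleSig M C (fun s => s % 4 = C.verts.ncard % 4) →
            (cutEdges M.graph C ∩ {e : Sym2 V | f e = 1}).Nonempty) := by
  rw [exists_fracPerfectMatching_iff hbip]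
  constructor
  · intro hdet
    have hmatching := exists_isMatchingInvolution_of_det_ne_zero hbip hdet
    refine ⟨hmatching, fun f hf C hC heven hsig => ?_⟩
    obtain ⟨t, ht, rfl⟩ := (isOptFracMatching_iff hmatching).mp hf
    exact (ht.nonempty_cutEdges_inter_iff C).mpr
      ((ht.det_hMatrix_ne_zero_iff hbip hdisj).mp hdet C hC heven hsig)
  · rintro ⟨⟨t, ht⟩, hopt⟩
    refine (ht.det_hMatrix_ne_zero_iff hbip hdisj).mpr fun C hC heven hsig => ?_
    exact (ht.nonempty_cutEdges_inter_iff C).mp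
      (hopt _ ht.isOptFracMatching C hC heven hsig)

end MixedPaper
end

section
/- If the underlying graph G of a mixed graph G~ has a unique maximum matching, then r(G~) ≥ 2m(G). -/
open scoped Classical

namespace MixedPaper

universe u

variable {V : Type u}

/-
Reducing the Gaussian integers modulo the prime `1 + i` sends `1`, `i` and `-i` to `1`, so the
Hermitian adjacency matrix of every mixed graph reduces to the adjacency matrix over `ZMod 2` of
its underlying graph. There determinant and permanent agree, and in the permanent of a symmetric
matrix the terms of `σ` and `σ⁻¹` cancel, so that only involutions survive. For an adjacency
matrix the surviving involutions are the perfect matchings, hence a vertex set `S` whose induced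
graph has an odd number of perfect matchings carries a nonsingular principal submatrix. When the
maximum matching is unique, its vertex set has exactly one.
-/

open Equiv Function

section Determinant

variable {m n k R : Type*} [Fintype k] [DecidableEq k] [CommRing R]

theorem card_le_rank_of_det_submatrix_ne_zero [IsDomain R] [Fintype n] (A : Matrix m n R)
    (r : k → m) (c : k → n) (h : (A.submatrix r c).det ≠ 0) : Fintype.card k ≤ A.rank :=
  (Matrix.rank_of_det_ne_zero h).symm.trans_le (A.rank_submatrix_le r c)

variable [CharP R 2]

theorem det_eq_permanent_of_charTwo (A : Matrix k k R) : A.det = A.permanent := by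
  rw [Matrix.det_apply, Matrix.permanent]
  refine Finset.sum_congr rfl fun σ _ => ?_
  rcases Int.units_eq_one_or (Perm.sign σ) with h | h
  · rw [h, one_smul]
  · rw [h, Units.neg_smul, one_smul, CharTwo.neg_eq]

theorem permanent_eq_sum_inv_eq_self_of_charTwo {A : Matrix k k R} (hA : A.IsSymm) :
    A.permanent = ∑ σ : Perm k with σ⁻¹ = σ, ∏ i, A (σ i) i := by
  have prod_inv (σ : Perm k) : ∏ i, A (σ⁻¹ i) i = ∏ i, A (σ i) i := by
    rw [← Equiv.prod_comp σ]
    exact Finset.prod_congr rfl fun i _ => by rw [Perm.coe_inv, symm_apply_apply, hA.apply]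
  have cancel : ∑ σ : Perm k with σ⁻¹ ≠ σ, ∏ i, A (σ i) i = 0 := by
    refine Finset.sum_involution (fun σ _ => σ⁻¹) (fun σ _ => ?_)
      (fun σ hσ _ => (Finset.mem_filter.1 hσ).2) (fun σ hσ => ?_) (fun σ _ => inv_inv σ)
    · rw [prod_inv, CharTwo.add_self_eq_zero]
    · exact Finset.mem_filter.2 ⟨Finset.mem_univ _, inv_injective.ne (Finset.mem_filter.1 hσ).2⟩
  rw [Matrix.permanent, ← Finset.sum_filter_add_sum_filter_not _ (fun σ : Perm k => σ⁻¹ = σ),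
    cancel, add_zero]

end Determinant

section Matching

variable {G : SimpleGraph V} {S : Set V}

theorem ncard_verts_of_isMatching {N : G.Subgraph} [Finite N.verts] (hN : N.IsMatching) :
    N.verts.ncard = 2 * N.edgeSet.ncard := by
  have := Fintype.ofFinite N.verts
  have degree_eq_one (v : N.verts) [Fintype (N.coe.neighborSet v)] : N.coe.degree v = 1 := by
    obtain ⟨w, hvw, huniq⟩ := hN v.2
    exact SimpleGraph.degree_eq_one_iff_existsUnique_adj.2
      ⟨⟨w, hvw.snd_mem⟩, hvw, fun w' hvw' => Subtype.ext (huniq w' hvw')⟩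
  have handshake := N.coe.sum_degrees_eq_twice_card_edges
  simp only [degree_eq_one, Finset.sum_const, Finset.card_univ, smul_eq_mul, mul_one] at handshake
  rw [← N.image_coe_edgeSet_coe, Set.ncard_image_of_injective _
    (Sym2.map.injective Subtype.val_injective), ← SimpleGraph.coe_edgeFinset, Set.ncard_coe_finset,
    ← handshake, ← Nat.card_eq_fintype_card, Nat.card_coe_set_eq]

/-- The matchings of `G` covering exactly the vertex set `S`, i.e. the perfect matchings of the
graph induced on `S`, viewed as subgraphs of `G`. -/
def matchingsOn (G : SimpleGraph V) (S : Set V) : Set G.Subgraph :=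
  {N | N.IsMatching ∧ N.verts = S}

theorem matchingsOn_verts_eq_singleton {N : G.Subgraph} [Finite N.verts] (hN : N.IsMatching)
    (huniq : ∀ N' : G.Subgraph, N'.IsMatching → N'.edgeSet.ncard = N.edgeSet.ncard → N' = N) :
    matchingsOn G N.verts = {N} := by
  refine Set.eq_singleton_iff_unique_mem.2 ⟨⟨hN, rfl⟩, fun N' ⟨hN', hverts⟩ => huniq N' hN' ?_⟩
  have : Finite N'.verts := by rwa [hverts]
  have hcard := ncard_verts_of_isMatching hN'
  rw [hverts, ncard_verts_of_isMatching hN] at hcard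
  exact (Nat.eq_of_mul_eq_mul_left two_pos hcard).symm

/-- The involutions of `S` that move every vertex to one of its neighbours in `G`; they encode the
matchings covering exactly `S`. -/
def adjInvolutions (G : SimpleGraph V) (S : Set V) : Set (Perm S) :=
  {σ | σ⁻¹ = σ ∧ ∀ v, G.Adj (σ v) v}

/-- The matching that joins every vertex of `S` to its image under an involution. -/
def involutionMatching (σ : adjInvolutions G S) : G.Subgraph where
  verts := S
  Adj u v := ∃ hu : u ∈ S, σ.1 ⟨u, hu⟩ = v
  adj_sub := by
    rintro u _ ⟨hu, rfl⟩
    exact (σ.2.2 ⟨u, hu⟩).symm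
  edge_vert := fun ⟨hu, _⟩ => hu
  symm := ⟨by
    rintro u _ ⟨hu, rfl⟩
    have hσ : σ.1 (σ.1 ⟨u, hu⟩) = ⟨u, hu⟩ :=
      (Perm.inv_eq_iff_eq.1 (DFunLike.congr_fun σ.2.1 _)).symm
    exact ⟨(σ.1 ⟨u, hu⟩).2, congrArg Subtype.val hσ⟩⟩

theorem involutionMatching_mem_matchingsOn (σ : adjInvolutions G S) :
    involutionMatching σ ∈ matchingsOn G S := by
  refine ⟨fun v hv => ⟨σ.1 ⟨v, hv⟩, ⟨hv, rfl⟩, ?_⟩, rfl⟩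
  rintro _ ⟨_, rfl⟩
  rfl

theorem involutionMatching_injective :
    Injective (involutionMatching : adjInvolutions G S → G.Subgraph) := by
  intro σ τ h
  refine Subtype.ext (Equiv.ext fun v => Subtype.ext ?_)
  have hσ : (involutionMatching σ).Adj v (σ.1 v) := ⟨v.2, rfl⟩
  obtain ⟨_, hτ⟩ := h ▸ hσ
  exact hτ.symm

theorem exists_involutionMatching_eq {N : G.Subgraph} (hN : N ∈ matchingsOn G S) :
    ∃ σ : adjInvolutions G S, involutionMatching σ = N := by
  obtain ⟨hN, rfl⟩ := hN
  choose partner hadj huniq using fun v : N.verts => hN v.2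
  let f (v : N.verts) : N.verts := ⟨partner v, (hadj v).snd_mem⟩
  have hf : Involutive f := fun v => Subtype.ext (huniq (f v) v (hadj v).symm).symm
  refine ⟨⟨hf.toPerm, hf.toPerm_symm, fun v => (hadj v).adj_sub.symm⟩,
    SimpleGraph.Subgraph.ext rfl ?_⟩
  ext u v
  constructor
  · rintro ⟨hu, rfl⟩
    exact hadj ⟨u, hu⟩
  · exact fun huv => ⟨huv.fst_mem, (huniq ⟨u, huv.fst_mem⟩ v huv).symm⟩

theorem ncard_adjInvolutions (G : SimpleGraph V) (S : Set V) :
    (adjInvolutions G S).ncard = (matchingsOn G S).ncard := by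
  have range_eq : Set.range (involutionMatching (G := G) (S := S)) = matchingsOn G S :=
    Set.Subset.antisymm (Set.range_subset_iff.2 involutionMatching_mem_matchingsOn)
      fun _ => exists_involutionMatching_eq
  rw [← range_eq, ← Nat.card_coe_set_eq, ← Nat.card_coe_set_eq,
    Nat.card_range_of_injective involutionMatching_injective]

theorem det_submatrix_adjMatrix_of_charTwo {R : Type*} [CommRing R] [CharP R 2]
    (G : SimpleGraph V) [DecidableRel G.Adj] (S : Set V) [Fintype S] [DecidableEq S] :
    ((G.adjMatrix R).submatrix ((↑) : S → V) (↑)).det = ((matchingsOn G S).ncard : R) := by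
  have prod_eq (σ : Perm S) :
      ∏ v, (G.adjMatrix R).submatrix ((↑) : S → V) (↑) (σ v) v =
        if ∀ v, G.Adj (σ v) v then 1 else 0 := by
    simp only [Matrix.submatrix_apply, SimpleGraph.adjMatrix_apply, Finset.prod_boole,
      Finset.mem_univ, true_imp_iff]
  rw [det_eq_permanent_of_charTwo,
    permanent_eq_sum_inv_eq_self_of_charTwo (G.isSymm_adjMatrix.submatrix _),
    Finset.sum_congr rfl fun σ _ => prod_eq σ, Finset.sum_boole, Finset.filter_filter,
    ← ncard_adjInvolutions, ← Set.ncard_coe_finset, Finset.coe_filter_univ]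
  rfl

end Matching

/-- Reduction of the Gaussian integers modulo the prime `1 + i`; every unit becomes `1`. -/
def gaussianReduction : GaussianInt →+* ZMod 2 :=
  Zsqrtd.lift ⟨1, rfl⟩

namespace MixedGraph

/-- The Hermitian adjacency matrix with its entries taken in `ℤ[i]`, where they can be reduced
modulo `1 + i`. -/
noncomputable def gaussianMatrix (M : MixedGraph V) : Matrix V V GaussianInt := fun u v =>
  if M.arc u v then Zsqrtd.sqrtd
  else if M.arc v u then -Zsqrtd.sqrtd
  else if M.graph.Adj u v then 1 else 0

theorem gaussianMatrix_map_toComplex [Fintype V] [DecidableEq V] (M : MixedGraph V) :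
    M.gaussianMatrix.map GaussianInt.toComplex = M.hMatrix := by
  ext u v
  simp only [Matrix.map_apply, gaussianMatrix, hMatrix]
  split_ifs <;> simp [GaussianInt.toComplex_def]

theorem gaussianMatrix_map_gaussianReduction (M : MixedGraph V) :
    M.gaussianMatrix.map gaussianReduction = M.graph.adjMatrix (ZMod 2) := by
  ext u v
  have reduction_sqrtd : gaussianReduction Zsqrtd.sqrtd = 1 := by simp [gaussianReduction]
  simp only [Matrix.map_apply, gaussianMatrix, SimpleGraph.adjMatrix_apply]
  have adj_of_arc := M.arc_adj u v
  have adj_of_arc_symm := M.arc_adj v u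
  split_ifs <;> simp_all [SimpleGraph.adj_comm]

theorem det_submatrix_gaussianMatrix_ne_zero (M : MixedGraph V) {S : Set V} [Fintype S]
    [DecidableEq S] (hodd : Odd (matchingsOn M.graph S).ncard) :
    (M.gaussianMatrix.submatrix ((↑) : S → V) (↑)).det ≠ 0 := by
  intro hdet
  have reduced : gaussianReduction (M.gaussianMatrix.submatrix ((↑) : S → V) (↑)).det = 1 := by
    rw [RingHom.map_det, RingHom.mapMatrix_apply, ← Matrix.submatrix_map,
      gaussianMatrix_map_gaussianReduction, det_submatrix_adjMatrix_of_charTwo,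
      ZMod.natCast_eq_one_iff_odd.2 hodd]
  rw [hdet, map_zero] at reduced
  exact zero_ne_one reduced

theorem det_submatrix_hMatrix_ne_zero [Fintype V] [DecidableEq V] (M : MixedGraph V) {S : Set V}
    (hodd : Odd (matchingsOn M.graph S).ncard) :
    (M.hMatrix.submatrix ((↑) : S → V) (↑)).det ≠ 0 := by
  rw [← gaussianMatrix_map_toComplex, Matrix.submatrix_map, ← RingHom.mapMatrix_apply,
    ← RingHom.map_det]
  exact GaussianInt.toComplex_eq_zero.not.2 (M.det_submatrix_gaussianMatrix_ne_zero hodd)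

end MixedGraph

theorem hRank_ge_of_unique_maximum_matching_general [Fintype V] [DecidableEq V]
    (M : MixedGraph V) {S : Set V} (hodd : Odd (matchingsOn M.graph S).ncard) :
    S.ncard ≤ M.hRank := by
  rw [← Nat.card_coe_set_eq, Nat.card_eq_fintype_card]
  exact card_le_rank_of_det_submatrix_ne_zero _ _ _ (M.det_submatrix_hMatrix_ne_zero hodd)

/-- If the underlying graph of a mixed graph has a unique maximum
matching, then r(G̃) ≥ 2m(G). -/
theorem hRank_ge_of_unique_maximum_matching
    {V : Type u} [Fintype V] [DecidableEq V] (M : MixedGraph V)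
    (h : ∃! N : M.graph.Subgraph,
      N.IsMatching ∧ N.edgeSet.ncard = matchingNumber M.graph) :
    2 * matchingNumber M.graph ≤ M.hRank := by
  obtain ⟨N, ⟨hN, hcard⟩, huniq⟩ := h
  have hsingle : matchingsOn M.graph N.verts = {N} :=
    matchingsOn_verts_eq_singleton hN fun N' hN' hN'card =>
      huniq N' ⟨hN', hN'card.trans hcard⟩
  rw [← hcard, ← ncard_verts_of_isMatching hN]
  exact hRank_ge_of_unique_maximum_matching_general M (by simp [hsingle])

end MixedPaper
end

section
/- Let G~ be a mixed graph with underlying graph G, 0 ≤ κ(G) ≤ c(G), and r(G~) = 2m(G) − 2κ(G). Then for every vertex u lying on some even cycle of G: κ(G − u) = κ(G) − 1, m(G − u) = m(G) − 1, r(G~ − u) = r(G~), and r(G~ − u) = 2m(G − u) − 2κ(G − u). -/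
open scoped Classical

namespace MixedPaper

universe u

variable {V : Type u}

/-!
Modulo `1 + i` the Hermitian adjacency matrix becomes the adjacency matrix of `G` over `𝔽₂`, whose
determinant counts the perfect matchings of `G` modulo two. A graph without even cycles has at most
one perfect matching, because two of them differ by even cycles; so if `κ(G) = 0`, the principal
minor on the vertices of a maximum matching is nonzero and `2m(G) ≤ r`. Deleting one vertex from
each even cycle lowers `m` by at most one per vertex, which gives `2m(G) ≤ r + 2κ(G)` in general.

When equality holds and `u` lies on an even cycle, deleting `u` lowers `κ` by at least one, lowers
`m` by at most one and does not raise `r`; the inequality for `G - u` then makes all three sharp.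
-/

section CharTwo

variable {n R : Type*} [Fintype n] [DecidableEq n] [CommRing R] [CharP R 2]

-- In characteristic two signs disappear, and for symmetric `A` the terms of `σ` and `σ⁻¹` cancel.
lemma det_eq_sum_involutive_of_isSymm {A : Matrix n n R} (hA : A.IsSymm) :
    A.det = ∑ σ ∈ ({σ | Function.Involutive σ} : Finset (Equiv.Perm n)), ∏ i, A (σ i) i := by
  have sign_eq_one (σ : Equiv.Perm n) : ((σ.sign : ℤ) : R) = 1 := by
    rcases Int.units_eq_one_or σ.sign with h | h <;> simp [h, CharTwo.neg_eq]
  have prod_inv (σ : Equiv.Perm n) : ∏ i, A (σ⁻¹ i) i = ∏ i, A (σ i) i := by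
    rw [← Equiv.prod_comp σ]
    exact Finset.prod_congr rfl fun i _ ↦ by
      rw [Equiv.Perm.inv_def, σ.symm_apply_apply, hA.apply]
  have cancel : ∑ σ ∈ ({σ | ¬ Function.Involutive σ} : Finset (Equiv.Perm n)),
      ∏ i, A (σ i) i = 0 := by
    refine Finset.sum_involution (fun σ _ ↦ σ⁻¹) (fun σ _ ↦ ?_) (fun σ hσ _ h ↦ ?_)
      (fun σ hσ ↦ ?_) (fun σ _ ↦ inv_inv σ)
    · rw [prod_inv, CharTwo.add_self_eq_zero]
    · exact (Finset.mem_filter.1 hσ).2 fun a ↦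
        (Equiv.Perm.inv_eq_iff_eq.1 (DFunLike.congr_fun h a)).symm
    · refine Finset.mem_filter.2
        ⟨Finset.mem_univ _, fun h ↦ (Finset.mem_filter.1 hσ).2 fun a ↦ ?_⟩
      simpa using (congrArg (fun x ↦ σ (σ x)) (h a)).symm
  simp only [Matrix.det_apply', sign_eq_one, one_mul]
  rw [← Finset.sum_filter_add_sum_filter_not _ (fun σ : Equiv.Perm n ↦ Function.Involutive σ),
    cancel, add_zero]

end CharTwo

section EvenCycles

variable {W : Type*} {G : SimpleGraph V} {G' : SimpleGraph W}

/-- The set of even cycles of `G`, so that `evenCycleCount G` is its cardinality. -/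
def evenCycles (G : SimpleGraph V) : Set G.Subgraph :=
  {C | IsCycleSubgraph C ∧ Even C.verts.ncard}

lemma subgraph_map_injective {f : G →g G'} (hf : Function.Injective f) :
    Function.Injective (SimpleGraph.Subgraph.map f) := by
  intro C D h
  have hverts : f '' C.verts = f '' D.verts := congrArg SimpleGraph.Subgraph.verts h
  have hadj : Relation.Map C.Adj f f = Relation.Map D.Adj f f :=
    congrArg SimpleGraph.Subgraph.Adj h
  refine SimpleGraph.Subgraph.ext (hf.image_injective hverts) ?_
  funext a b
  rw [← Relation.map_apply_apply hf hf C.Adj, hadj, Relation.map_apply_apply hf hf]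

lemma subgraph_map_connected (f : G →g G') {C : G.Subgraph} (hC : C.Connected) :
    (C.map f).Connected := by
  let g : C.coe →g (C.map f).coe :=
    ⟨fun v ↦ ⟨f v, v, v.2, rfl⟩, fun {a b} hab ↦ ⟨a, b, hab, rfl, rfl⟩⟩
  refine ⟨hC.coe.map g ?_⟩
  rintro ⟨_, v, hv, rfl⟩
  exact ⟨⟨v, hv⟩, rfl⟩

lemma IsCycleSubgraph.map {f : G →g G'} (hf : Function.Injective f) {C : G.Subgraph}
    (hC : IsCycleSubgraph C) : IsCycleSubgraph (C.map f) := by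
  refine ⟨subgraph_map_connected f hC.1, ?_⟩
  rintro _ ⟨v, hv, rfl⟩
  have neighbors_eq : {w | (C.map f).Adj (f v) w} = f '' {w | C.Adj v w} := by
    ext w
    constructor
    · rintro ⟨a, b, hab, ha, rfl⟩
      exact ⟨b, hf ha ▸ hab, rfl⟩
    · rintro ⟨b, hb, rfl⟩
      exact ⟨v, b, hb, rfl, rfl⟩
  rw [neighbors_eq, Set.ncard_image_of_injective _ hf, hC.2 v hv]

lemma map_mem_evenCycles {f : G →g G'} (hf : Function.Injective f) {C : G.Subgraph}
    (hC : C ∈ evenCycles G) : C.map f ∈ evenCycles G' :=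
  ⟨hC.1.map hf, by
    rw [SimpleGraph.Subgraph.map_verts, Set.ncard_image_of_injective _ hf]
    exact hC.2⟩

lemma map_induce_mem_evenCycles {S : Set V} {C : (G.induce S).Subgraph}
    (hC : C ∈ evenCycles (G.induce S)) :
    C.map (SimpleGraph.Embedding.induce S).toHom ∈ {D ∈ evenCycles G | D.verts ⊆ S} := by
  refine ⟨map_mem_evenCycles Subtype.val_injective hC, ?_⟩
  rintro _ ⟨v, -, rfl⟩
  exact v.2

lemma evenCycles_induce_eq_empty (hG : evenCycles G = ∅) (S : Set V) :
    evenCycles (G.induce S) = ∅ :=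
  Set.eq_empty_of_forall_notMem fun _ hC ↦
    Set.notMem_empty _ (hG ▸ (map_induce_mem_evenCycles hC).1)

lemma evenCycleCount_induce_compl_singleton_lt [Finite V] {u : V} (hu : OnEvenCycle G u) :
    evenCycleCount (G.induce {u}ᶜ) < evenCycleCount G := by
  obtain ⟨C, hC, hCeven, huC⟩ := hu
  calc evenCycleCount (G.induce {u}ᶜ)
      ≤ {D ∈ evenCycles G | D.verts ⊆ {u}ᶜ}.ncard :=
        Set.ncard_le_ncard_of_injOn _ (fun _ hD ↦ map_induce_mem_evenCycles hD)
          (subgraph_map_injective Subtype.val_injective).injOn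
    _ < evenCycleCount G :=
        Set.ncard_lt_ncard ⟨fun _ hD ↦ hD.1, fun h ↦ (h ⟨hC, hCeven⟩).2 huC rfl⟩

lemma exists_ncard_le_evenCycles_induce_compl_eq_empty [Finite V] (G : SimpleGraph V) :
    ∃ S : Set V, S.ncard ≤ evenCycleCount G ∧ evenCycles (G.induce Sᶜ) = ∅ := by
  have nonempty_verts (C : evenCycles G) : C.1.verts.Nonempty := C.2.1.1.nonempty
  choose vertex vertex_mem using nonempty_verts
  refine ⟨Set.range vertex, ?_, Set.eq_empty_of_forall_notMem fun C hC ↦ ?_⟩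
  · rw [← Set.image_univ]
    exact (Set.ncard_image_le Set.finite_univ).trans_eq (Set.ncard_univ _)
  · obtain ⟨hD, hDsub⟩ := map_induce_mem_evenCycles hC
    exact hDsub (vertex_mem ⟨_, hD⟩) ⟨⟨_, hD⟩, rfl⟩

end EvenCycles

section MatchingPerm

variable {G : SimpleGraph V} {σ τ : Equiv.Perm V}

/-- A perfect matching of `G`, encoded as the permutation exchanging the ends of each of its edges,
which is the form in which perfect matchings occur in the Leibniz formula. -/
structure IsMatchingPerm (G : SimpleGraph V) (σ : Equiv.Perm V) : Prop where
  involutive : Function.Involutive σ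
  adj : ∀ v, G.Adj v (σ v)

/-- The union of two perfect matchings of `G`. Its components are common edges of the two matchings
and cycles alternating between them. -/
def matchingUnion (hσ : IsMatchingPerm G σ) (hτ : IsMatchingPerm G τ) : SimpleGraph V where
  Adj a b := b = σ a ∨ b = τ a
  symm := ⟨by
    rintro a b (rfl | rfl)
    exacts [.inl (hσ.involutive a).symm, .inr (hτ.involutive a).symm]⟩
  loopless := ⟨by
    rintro a (h | h)
    exacts [(hσ.adj a).ne h, (hτ.adj a).ne h]⟩

lemma matchingUnion_le (hσ : IsMatchingPerm G σ) (hτ : IsMatchingPerm G τ) :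
    matchingUnion hσ hτ ≤ G := by
  rintro a b (rfl | rfl)
  exacts [hσ.adj a, hτ.adj a]

lemma ne_of_reachable_matchingUnion (hσ : IsMatchingPerm G σ) (hτ : IsMatchingPerm G τ)
    {a b : V} (hab : (matchingUnion hσ hτ).Reachable a b) (ha : σ a ≠ τ a) : σ b ≠ τ b := by
  have ne_of_adj {v w : V} (hvw : (matchingUnion hσ hτ).Adj v w) (hv : σ v ≠ τ v) :
      σ w ≠ τ w := by
    rcases hvw with rfl | rfl <;> intro h
    · exact hv (τ.injective (by rw [hτ.involutive, ← h, hσ.involutive]))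
    · exact hv (σ.injective (by rw [hσ.involutive, h, hτ.involutive]))
  obtain ⟨p⟩ := hab
  induction p with
  | nil => exact ha
  | cons hvw _ ih => exact ih (ne_of_adj hvw ha)

lemma even_ncard_of_involutive {α : Type*} {f : α → α} (hf : Function.Involutive f) {s : Set α}
    (hs : s.Finite) (hmaps : Set.MapsTo f s s) (hne : ∀ a ∈ s, f a ≠ a) : Even s.ncard := by
  have card_eq_zero : ∑ _a ∈ hs.toFinset, (1 : ZMod 2) = 0 :=
    Finset.sum_involution (fun a _ ↦ f a) (fun _ _ ↦ CharTwo.add_self_eq_zero 1)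
      (fun a ha _ ↦ hne a (hs.mem_toFinset.1 ha))
      (fun a ha ↦ hs.mem_toFinset.2 (hmaps (hs.mem_toFinset.1 ha))) (fun a _ ↦ hf a)
  rw [Set.ncard_eq_toFinset_card s hs, ← ZMod.natCast_eq_zero_iff_even]
  simpa using card_eq_zero

lemma toSubgraph_mem_evenCycles_matchingUnion [Finite V]
    (hσ : IsMatchingPerm G σ) (hτ : IsMatchingPerm G τ) {v : V} (hv : σ v ≠ τ v) :
    ((matchingUnion hσ hτ).connectedComponentMk v).toSubgraph ∈
      evenCycles (matchingUnion hσ hτ) := by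
  set c := (matchingUnion hσ hτ).connectedComponentMk v
  refine ⟨⟨c.connected_toSubgraph, fun w hw ↦ ?_⟩, ?_⟩
  · have neighbors_eq : {x | c.toSubgraph.Adj w x} = {σ w, τ w} :=
      Set.ext fun x ↦ ⟨fun h ↦ h.2.2, fun h ↦ ⟨hw, c.mem_supp_of_adj_mem_supp hw h, h⟩⟩
    have hvw : (matchingUnion hσ hτ).Reachable v w :=
      (SimpleGraph.ConnectedComponent.exact hw).symm
    rw [neighbors_eq, Set.ncard_pair (ne_of_reachable_matchingUnion hσ hτ hvw hv)]
  · exact even_ncard_of_involutive hσ.involutive (Set.toFinite _)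
      (fun w hw ↦ c.mem_supp_of_adj_mem_supp hw (.inl rfl)) (fun w _ ↦ (hσ.adj w).ne')

lemma IsMatchingPerm.eq_of_evenCycles_eq_empty [Finite V] (hG : evenCycles G = ∅)
    (hσ : IsMatchingPerm G σ) (hτ : IsMatchingPerm G τ) : σ = τ := by
  by_contra hne
  obtain ⟨v, hv⟩ : ∃ v, σ v ≠ τ v := by simpa [Equiv.ext_iff] using hne
  have cycle_mem := map_mem_evenCycles (f := .ofLE (matchingUnion_le hσ hτ))
    Function.injective_id (toSubgraph_mem_evenCycles_matchingUnion hσ hτ hv)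
  exact Set.notMem_empty _ (hG ▸ cycle_mem)

lemma det_adjMatrix_eq_one {R : Type*} [CommRing R] [CharP R 2] [Fintype V] [DecidableEq V]
    [DecidableRel G.Adj] (hG : evenCycles G = ∅) (hσ : IsMatchingPerm G σ) :
    (G.adjMatrix R).det = 1 := by
  rw [det_eq_sum_involutive_of_isSymm G.isSymm_adjMatrix, Finset.sum_eq_single σ]
  · exact Finset.prod_eq_one fun v _ ↦ by simp [(hσ.adj v).symm]
  · intro τ hτ hne
    obtain ⟨v, hv⟩ : ∃ v, ¬ G.Adj v (τ v) := by
      by_contra! hadj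
      exact hne (IsMatchingPerm.eq_of_evenCycles_eq_empty hG
        ⟨(Finset.mem_filter.1 hτ).2, hadj⟩ hσ)
    refine Finset.prod_eq_zero (Finset.mem_univ v) ?_
    rw [SimpleGraph.adjMatrix_apply, if_neg fun h ↦ hv h.symm]
  · simp [hσ.involutive]

end MatchingPerm

section Matching

variable {G : SimpleGraph V} {N : G.Subgraph}

lemma ncard_verts_eq_two_mul_ncard_edgeSet [Finite V] (hN : N.IsMatching) :
    N.verts.ncard = 2 * N.edgeSet.ncard := by
  cases nonempty_fintype V
  have degree_eq_one (v : N.verts) : N.degree v = 1 :=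
    N.degree_eq_one_iff_existsUnique_adj.2 (hN v.2)
  have handshake := N.coe.sum_degrees_eq_twice_card_edges
  simp only [SimpleGraph.Subgraph.coe_degree, degree_eq_one, Finset.sum_const, smul_eq_mul,
    mul_one, Finset.card_univ] at handshake
  rw [← N.image_coe_edgeSet_coe,
    Set.ncard_image_of_injective _ (Sym2.map.injective Subtype.val_injective),
    ← Nat.card_coe_set_eq, Nat.card_eq_fintype_card, handshake, ← SimpleGraph.coe_edgeFinset,
    Set.ncard_coe_finset]

lemma exists_isMatchingPerm_induce_verts (hN : N.IsMatching) :
    ∃ σ, IsMatchingPerm (G.induce N.verts) σ := by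
  choose partner adj_partner partner_unique using @hN
  let f (v : N.verts) : N.verts := ⟨partner v.2, N.edge_vert (adj_partner v.2).symm⟩
  have hf : Function.Involutive f := fun v ↦
    Subtype.ext (partner_unique (f v).2 v (adj_partner v.2).symm).symm
  exact ⟨hf.toPerm, hf, fun v ↦ N.adj_sub (adj_partner v.2)⟩

lemma bddAbove_matching_sizes [Finite V] (G : SimpleGraph V) :
    BddAbove {k | ∃ N : G.Subgraph, N.IsMatching ∧ N.edgeSet.ncard = k} := by
  refine ⟨Nat.card V, ?_⟩
  rintro _ ⟨N, hN, rfl⟩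
  have := ncard_verts_eq_two_mul_ncard_edgeSet hN
  have := Set.ncard_le_card N.verts
  omega

lemma ncard_edgeSet_le_matchingNumber [Finite V] (hN : N.IsMatching) :
    N.edgeSet.ncard ≤ matchingNumber G :=
  le_csSup (bddAbove_matching_sizes G) ⟨N, hN, rfl⟩

lemma exists_isMatching_ncard_edgeSet_eq_matchingNumber [Finite V] (G : SimpleGraph V) :
    ∃ N : G.Subgraph, N.IsMatching ∧ N.edgeSet.ncard = matchingNumber G :=
  Nat.sSup_mem (s := {k | ∃ N : G.Subgraph, N.IsMatching ∧ N.edgeSet.ncard = k})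
    ⟨_, ⊥, fun _ hv ↦ hv.elim, rfl⟩ (bddAbove_matching_sizes G)

lemma ncard_partners_le [Finite V] (hN : N.IsMatching) (S : Set V) :
    {w | ∃ v ∈ S, N.Adj v w}.ncard ≤ S.ncard := by
  choose! partner partner_mem adj_partner using
    fun w (hw : w ∈ {w | ∃ v ∈ S, N.Adj v w}) ↦ hw
  refine Set.ncard_le_ncard_of_injOn partner partner_mem fun w hw x hx h ↦ ?_
  exact hN.eq_of_adj_left (adj_partner w hw) (h ▸ adj_partner x hx)

/-- The edges of the matching `N` avoiding `S`, as a subgraph of the graph induced on `Sᶜ`. -/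
def matchingAvoiding (hN : N.IsMatching) (S : Set V) : (G.induce Sᶜ).Subgraph where
  verts := {w | w.1 ∈ N.verts ∧ ∀ v ∈ S, ¬ N.Adj v w}
  Adj a b := N.Adj a b
  adj_sub h := N.adj_sub h
  edge_vert {_ b} h :=
    ⟨N.edge_vert h, fun _ hv hva ↦ b.2 (hN.eq_of_adj_left h hva.symm ▸ hv)⟩
  symm := ⟨fun _ _ h ↦ N.symm.symm _ _ h⟩

lemma isMatching_matchingAvoiding (hN : N.IsMatching) (S : Set V) :
    (matchingAvoiding hN S).IsMatching := by
  rintro w ⟨hw, hwS⟩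
  obtain ⟨x, hwx, hx⟩ := hN hw
  exact ⟨⟨x, fun hxS ↦ hwS x hxS hwx.symm⟩, hwx, fun y hy ↦ Subtype.ext (hx y hy)⟩

lemma ncard_edgeSet_le_matchingAvoiding_add [Finite V] (hN : N.IsMatching) (S : Set V) :
    N.edgeSet.ncard ≤ (matchingAvoiding hN S).edgeSet.ncard + S.ncard := by
  have verts_subset : N.verts ⊆
      Subtype.val '' (matchingAvoiding hN S).verts ∪ (S ∪ {w | ∃ v ∈ S, N.Adj v w}) := by
    intro w hw
    by_cases hwS : w ∈ S ∪ {w | ∃ v ∈ S, N.Adj v w}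
    · exact .inr hwS
    · exact .inl ⟨⟨w, fun h ↦ hwS (.inl h)⟩, ⟨hw, fun v hv hvw ↦ hwS (.inr ⟨v, hv, hvw⟩)⟩, rfl⟩
  have verts_le : N.verts.ncard ≤ (matchingAvoiding hN S).verts.ncard + (S.ncard + S.ncard) :=
    calc N.verts.ncard ≤ _ := Set.ncard_le_ncard verts_subset
      _ ≤ _ := Set.ncard_union_le _ _
      _ ≤ _ := by
        rw [Set.ncard_image_of_injective _ Subtype.val_injective]
        gcongr
        exact (Set.ncard_union_le _ _).trans (Nat.add_le_add_left (ncard_partners_le hN S) _)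
  have := ncard_verts_eq_two_mul_ncard_edgeSet hN
  have := ncard_verts_eq_two_mul_ncard_edgeSet (isMatching_matchingAvoiding hN S)
  omega

lemma matchingNumber_le_induce_compl_add_ncard [Finite V] (G : SimpleGraph V) (S : Set V) :
    matchingNumber G ≤ matchingNumber (G.induce Sᶜ) + S.ncard := by
  obtain ⟨N, hN, hNcard⟩ := exists_isMatching_ncard_edgeSet_eq_matchingNumber G
  calc matchingNumber G = N.edgeSet.ncard := hNcard.symm
    _ ≤ (matchingAvoiding hN S).edgeSet.ncard + S.ncard :=
      ncard_edgeSet_le_matchingAvoiding_add hN S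
    _ ≤ matchingNumber (G.induce Sᶜ) + S.ncard := by
      gcongr
      exact ncard_edgeSet_le_matchingNumber (isMatching_matchingAvoiding hN S)

end Matching

section ModTwo

variable {K : Type*} [CommRing K] {G : SimpleGraph V} {A : Matrix V V K}

/-- `A` is an adjacency matrix of `G` modulo two: its entries lie in a subring of `K` with a
homomorphism to `ZMod 2` that takes `A` to the `0`-`1` adjacency matrix of `G`. Besides Hermitian
adjacency matrices of mixed graphs, this covers those of signed graphs and the skew adjacency
matrices of oriented graphs. -/
def IsAdjMatrixModTwo (G : SimpleGraph V) (A : Matrix V V K) : Prop :=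
  ∃ (R : Subring K) (φ : R →+* ZMod 2) (B : Matrix V V R),
    B.map R.subtype = A ∧ B.map φ = G.adjMatrix (ZMod 2)

namespace IsAdjMatrixModTwo

lemma of_injective {R : Type*} [CommRing R] {ι : R →+* K} (hι : Function.Injective ι)
    (φ : R →+* ZMod 2) {B : Matrix V V R} (hB : B.map φ = G.adjMatrix (ZMod 2)) :
    IsAdjMatrixModTwo G (B.map ι) := by
  let e : R ≃+* ι.range := RingEquiv.ofLeftInverse (Function.leftInverse_invFun hι)
  refine ⟨ι.range, φ.comp e.symm, B.map e, rfl, ?_⟩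
  rw [← hB]
  ext u v
  simp

lemma submatrix (hA : IsAdjMatrixModTwo G A) (S : Set V) :
    IsAdjMatrixModTwo (G.induce S) (A.submatrix (Subtype.val : S → V) Subtype.val) := by
  obtain ⟨R, φ, B, rfl, hB⟩ := hA
  refine ⟨R, φ, B.submatrix Subtype.val Subtype.val, rfl, ?_⟩
  ext u v
  simpa using congrFun (congrFun hB u) v

lemma det_ne_zero [Fintype V] [DecidableEq V] (hA : IsAdjMatrixModTwo G A)
    (hG : evenCycles G = ∅) {σ : Equiv.Perm V} (hσ : IsMatchingPerm G σ) : A.det ≠ 0 := by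
  obtain ⟨R, φ, B, rfl, hB⟩ := hA
  have det_mod_two : φ B.det = 1 := by
    rw [RingHom.map_det, RingHom.mapMatrix_apply, hB, det_adjMatrix_eq_one hG hσ]
  have det_eq : (B.map R.subtype).det = R.subtype B.det := (R.subtype.map_det B).symm
  rw [det_eq, map_ne_zero_iff _ R.subtype_injective]
  intro h
  simp [h] at det_mod_two

variable [IsDomain K] [Fintype V]

lemma two_mul_matchingNumber_le_rank (hA : IsAdjMatrixModTwo G A) (hG : evenCycles G = ∅) :
    2 * matchingNumber G ≤ A.rank := by
  obtain ⟨N, hN, hNcard⟩ := exists_isMatching_ncard_edgeSet_eq_matchingNumber G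
  obtain ⟨σ, hσ⟩ := exists_isMatchingPerm_induce_verts hN
  have hdet := (hA.submatrix N.verts).det_ne_zero (evenCycles_induce_eq_empty hG N.verts) hσ
  calc 2 * matchingNumber G = N.verts.ncard := by
        rw [ncard_verts_eq_two_mul_ncard_edgeSet hN, hNcard]
    _ = Fintype.card N.verts := by rw [← Nat.card_coe_set_eq, Nat.card_eq_fintype_card]
    _ = (A.submatrix (Subtype.val : N.verts → V) Subtype.val).rank :=
        (Matrix.rank_of_det_ne_zero hdet).symm
    _ ≤ A.rank := A.rank_submatrix_le (Subtype.val : N.verts → V) Subtype.val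

lemma two_mul_matchingNumber_le_rank_add (hA : IsAdjMatrixModTwo G A) :
    2 * matchingNumber G ≤ A.rank + 2 * evenCycleCount G := by
  obtain ⟨S, hScard, hS⟩ := exists_ncard_le_evenCycles_induce_compl_eq_empty G
  have matching_le := matchingNumber_le_induce_compl_add_ncard G S
  have le_rank := (hA.submatrix Sᶜ).two_mul_matchingNumber_le_rank hS
  have rank_le := A.rank_submatrix_le (Subtype.val : (Sᶜ : Set V) → V)
    (Subtype.val : (Sᶜ : Set V) → V)
  omega

end IsAdjMatrixModTwo

end ModTwo

section GaussianIntegers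

/-- The reduction of the Gaussian integers modulo `1 + i`. -/
def gaussianModTwo : GaussianInt →+* ZMod 2 :=
  Zsqrtd.lift ⟨1, by decide⟩

/-- The Hermitian adjacency matrix of a mixed graph, with entries in the Gaussian integers. -/
noncomputable def MixedGraph.gaussianMatrix_s6 (M : MixedGraph V) : Matrix V V GaussianInt :=
  fun u v ↦
    if M.arc u v then ⟨0, 1⟩ else if M.arc v u then ⟨0, -1⟩ else if M.graph.Adj u v then 1 else 0

lemma MixedGraph.map_toComplex_gaussianMatrix [Fintype V] [DecidableEq V] (M : MixedGraph V) :
    M.gaussianMatrix_s6.map GaussianInt.toComplex = M.hMatrix := by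
  ext u v
  simp only [Matrix.map_apply, gaussianMatrix_s6, hMatrix]
  split_ifs <;> simp [GaussianInt.toComplex_def]

lemma MixedGraph.map_gaussianModTwo_gaussianMatrix (M : MixedGraph V) :
    M.gaussianMatrix_s6.map gaussianModTwo = M.graph.adjMatrix (ZMod 2) := by
  ext u v
  have adj_of_arc := M.arc_adj u v
  have adj_of_arc_symm := fun h ↦ (M.arc_adj v u h).symm
  simp only [Matrix.map_apply, gaussianMatrix_s6, SimpleGraph.adjMatrix_apply]
  split_ifs <;> simp_all [gaussianModTwo, Zsqrtd.lift]

lemma MixedGraph.isAdjMatrixModTwo_hMatrix [Fintype V] [DecidableEq V] (M : MixedGraph V) :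
    IsAdjMatrixModTwo M.graph M.hMatrix :=
  M.map_toComplex_gaussianMatrix ▸ .of_injective GaussianInt.toComplex_injective gaussianModTwo
    M.map_gaussianModTwo_gaussianMatrix

end GaussianIntegers

theorem vertex_deletion_of_hRank_eq_lower_bound_general {K : Type*} [CommRing K] [IsDomain K]
    [Fintype V] {G : SimpleGraph V} {A : Matrix V V K} (hA : IsAdjMatrixModTwo G A)
    (hr : (A.rank : ℤ) = 2 * (matchingNumber G : ℤ) - 2 * (evenCycleCount G : ℤ))
    {u : V} [Fintype ({u}ᶜ : Set V)] (hu : OnEvenCycle G u) :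
    let A' : Matrix ({u}ᶜ : Set V) ({u}ᶜ : Set V) K := A.submatrix Subtype.val Subtype.val
    (evenCycleCount (G.induce {u}ᶜ) : ℤ) = (evenCycleCount G : ℤ) - 1 ∧
      (matchingNumber (G.induce {u}ᶜ) : ℤ) = (matchingNumber G : ℤ) - 1 ∧
      A'.rank = A.rank ∧
      (A'.rank : ℤ) =
        2 * (matchingNumber (G.induce {u}ᶜ) : ℤ) - 2 * (evenCycleCount (G.induce {u}ᶜ) : ℤ) := by
  intro A'
  have cycles_lt := evenCycleCount_induce_compl_singleton_lt hu
  have matching_le := matchingNumber_le_induce_compl_add_ncard G {u}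
  have rank_le : A'.rank ≤ A.rank :=
    A.rank_submatrix_le (Subtype.val : ({u}ᶜ : Set V) → V) (Subtype.val : ({u}ᶜ : Set V) → V)
  have lower_bound : 2 * matchingNumber (G.induce {u}ᶜ) ≤
      A'.rank + 2 * evenCycleCount (G.induce {u}ᶜ) := by
    have hA' : IsAdjMatrixModTwo (G.induce {u}ᶜ) A' := hA.submatrix {u}ᶜ
    exact hA'.two_mul_matchingNumber_le_rank_add
  rw [Set.ncard_singleton] at matching_le
  refine ⟨?_, ?_, ?_, ?_⟩ <;> omega

/-- If 0 ≤ κ(G) ≤ c(G) and r(G̃) = 2m(G) − 2κ(G), then for every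
vertex u on an even cycle of G: κ(G−u) = κ(G) − 1, m(G−u) = m(G) − 1,
r(G̃−u) = r(G̃) and r(G̃−u) = 2m(G−u) − 2κ(G−u). -/
theorem vertex_deletion_of_hRank_eq_lower_bound
    {V : Type u} [Fintype V] [DecidableEq V] (M : MixedGraph V)
    (hκc : (evenCycleCount M.graph : ℤ) ≤ cyclomatic M.graph)
    (hr : (M.hRank : ℤ) =
      2 * (matchingNumber M.graph : ℤ) - 2 * (evenCycleCount M.graph : ℤ)) :
    ∀ u : V, OnEvenCycle M.graph u →
      (evenCycleCount (M.induce {u}ᶜ).graph : ℤ) = (evenCycleCount M.graph : ℤ) - 1 ∧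
      (matchingNumber (M.induce {u}ᶜ).graph : ℤ) = (matchingNumber M.graph : ℤ) - 1 ∧
      (M.induce {u}ᶜ).hRank = M.hRank ∧
      ((M.induce {u}ᶜ).hRank : ℤ) =
        2 * (matchingNumber (M.induce {u}ᶜ).graph : ℤ) -
          2 * (evenCycleCount (M.induce {u}ᶜ).graph : ℤ) :=
  fun _ hu ↦ vertex_deletion_of_hRank_eq_lower_bound_general M.isAdjMatrixModTwo_hMatrix hr hu

end MixedPaper
end
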